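/- Let K ⊂ ℝ^{2n} be a convex body with 0 in its interior and smooth boundary, and let T ⊂ ℝ^{2n} be a convex body with 0 in its interior. Then for every capacity carrier γ of K, with period T₀, the derivative d_T(K) := lim_{ε→0⁺} (c(K+εT) − c(K))/ε satisfies d_T(K) ≤ length_{JT°}(γ) = ∫₀^{T₀} ‖γ̇(t)‖_{JT°} dt, where ‖x‖_{JT°} = inf{r > 0 : x ∈ r·JT°} and JT° = {Jy : y ∈ T°}. -/

import Mathlib

open MeasureTheory Real Set Filter intervalIntegral Metric
open scoped InnerProductSpace Topology Pointwise

noncomputable section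

/-- The phase space `ℝ^{2n}`. -/
abbrev E (n : ℕ) := EuclideanSpace ℝ (Fin (2 * n))

/-- The standard complex structure `J` on `ℝ^{2n}`, given in coordinates
`(x₁,y₁,…,xₙ,yₙ)` by `J(x₁,y₁,…,xₙ,yₙ) = (−y₁,x₁,…,−yₙ,xₙ)`. -/
def Jmap (n : ℕ) (v : E n) : E n := WithLp.toLp 2 fun i =>
  if _h : i.val % 2 = 0 then -v ⟨i.val + 1, by have := i.isLt; omega⟩
  else v ⟨i.val - 1, by have := i.isLt; omega⟩

/-- The support function `h_K(u) = sup_{x ∈ K} ⟨x, u⟩`. -/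
def suppFn (n : ℕ) (K : Set (E n)) (u : E n) : ℝ :=
  sSup ((fun x => ⟪x, u⟫_ℝ) '' K)

/-- A convex body: a compact convex set with nonempty interior. -/
def IsConvexBody (n : ℕ) (K : Set (E n)) : Prop :=
  IsCompact K ∧ Convex ℝ K ∧ (interior K).Nonempty

/-- Membership in the loop space `𝓔_p`: the pair `(z, dz)` represents an absolutely
continuous `2π`-periodic loop `z` with derivative `dz ∈ L^p([0,2π])`, mean zero and
normalized action `(1/2)∫₀^{2π} ⟨J z, ż⟩ = 1`. -/
def InE (n : ℕ) (p : ℝ) (z dz : ℝ → E n) : Prop :=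
  Function.Periodic z (2 * π) ∧
  (∀ a b : ℝ, IntervalIntegrable dz volume a b) ∧
  (∀ t, z t = z 0 + ∫ s in (0:ℝ)..t, dz s) ∧
  MemLp dz (ENNReal.ofReal p) (volume.restrict (Set.Ioc (0:ℝ) (2 * π))) ∧
  (∫ t in (0:ℝ)..(2 * π), z t) = 0 ∧
  (1 / 2) * ∫ t in (0:ℝ)..(2 * π), ⟪Jmap n (z t), dz t⟫_ℝ = 1

/-- The (Ekeland–Hofer–Zehnder) capacity of a convex body,
`c(S) = (π · inf_{z ∈ 𝓔₂} (1/2π) ∫₀^{2π} h_S(ż(t)) dt)²`. -/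
def capacity (n : ℕ) (S : Set (E n)) : ℝ :=
  (π * sInf { r : ℝ | ∃ z dz : ℝ → E n, InE n 2 z dz ∧
      r = (1 / (2 * π)) * ∫ t in (0:ℝ)..(2 * π), suppFn n S (dz t) }) ^ 2

/-- The action `𝒜(γ) = (1/2) ∫₀^{T₀} ⟨−Jγ̇(t), γ(t)⟩ dt` of a `T₀`-periodic curve. -/
def action (n : ℕ) (γ : ℝ → E n) (T₀ : ℝ) : ℝ :=
  (1 / 2) * ∫ t in (0:ℝ)..T₀, ⟪-Jmap n (deriv γ t), γ t⟫_ℝ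

/-- A closed characteristic on `∂K`: a nonconstant `T₀`-periodic `C¹` curve lying on
`∂K` satisfying `γ̇ = d·J∇F(γ)` for some `d > 0`, where `F = ‖·‖_K²`. -/
def IsClosedCharacteristic (n : ℕ) (K : Set (E n)) (γ : ℝ → E n) (T₀ : ℝ) : Prop :=
  0 < T₀ ∧ Function.Periodic γ T₀ ∧ ContDiff ℝ 1 γ ∧ (∃ s t, γ s ≠ γ t) ∧
  (∀ t, γ t ∈ frontier K) ∧
  ∃ d : ℝ, 0 < d ∧ ∀ t, deriv γ t = d • Jmap n (gradient (fun x => gauge K x ^ 2) (γ t))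

/-- A capacity carrier of `K`: a closed characteristic on `∂K` of minimal action. -/
def IsCapacityCarrier (n : ℕ) (K : Set (E n)) (γ : ℝ → E n) (T₀ : ℝ) : Prop :=
  IsClosedCharacteristic n K γ T₀ ∧
  ∀ γ' T₀', IsClosedCharacteristic n K γ' T₀' → action n γ T₀ ≤ action n γ' T₀'

/-- The minimal action of a closed characteristic on `∂K`. -/
def minAction (n : ℕ) (K : Set (E n)) : ℝ :=
  sInf { a : ℝ | ∃ γ T₀, IsClosedCharacteristic n K γ T₀ ∧ a = action n γ T₀ }

/-- `K` has smooth boundary: its gauge function is `C¹` away from the origin. -/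
def HasSmoothBoundary (n : ℕ) (K : Set (E n)) : Prop :=
  ContDiffOn ℝ 1 (gauge K) {(0 : E n)}ᶜ

/-- The `p`-sum `K +ₚ T` of Firey: the convex body with support function
`(h_K^p + h_T^p)^{1/p}`. -/
def pSum (n : ℕ) (p : ℝ) (K T : Set (E n)) : Set (E n) :=
  { x | ∀ u, ⟪x, u⟫_ℝ ≤ (suppFn n K u ^ p + suppFn n T u ^ p) ^ (1 / p) }

/-- The polar body `T° = {x : ⟨x,y⟩ ≤ 1 for all y ∈ T}`. -/
def polarBody (n : ℕ) (T : Set (E n)) : Set (E n) :=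
  { x | ∀ y ∈ T, ⟪x, y⟫_ℝ ≤ 1 }

/-- The length `∫₀^{T₀} ‖γ̇(t)‖_B dt` of a curve measured with the gauge of `B`. -/
def lengthIn (n : ℕ) (B : Set (E n)) (γ : ℝ → E n) (T₀ : ℝ) : ℝ :=
  ∫ t in (0:ℝ)..T₀, gauge B (deriv γ t)

/-- Critical point of the functional `I_p(z) = ∫₀^{2π} h_K^p(ż(t)) dt` on `𝓔_p`. -/
def IsCriticalPoint (n : ℕ) (p : ℝ) (K : Set (E n)) (z dz : ℝ → E n) : Prop :=
  ∀ ξ dξ : ℝ → E n,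
    Function.Periodic ξ (2 * π) →
    (∀ a b : ℝ, IntervalIntegrable dξ volume a b) →
    (∀ t, ξ t = ξ 0 + ∫ s in (0:ℝ)..t, dξ s) →
    MemLp dξ (ENNReal.ofReal p) (volume.restrict (Set.Ioc (0:ℝ) (2 * π))) →
    (∫ t in (0:ℝ)..(2 * π), ξ t) = 0 →
    (∫ t in (0:ℝ)..(2 * π), ⟪ξ t, Jmap n (dz t)⟫_ℝ) = 0 →
    (∫ t in (0:ℝ)..(2 * π), ⟪gradient (fun u => suppFn n K u ^ p) (dz t), dξ t⟫_ℝ) = 0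

/-- The rotation-invariant probability measure on the unit sphere of `ℝ^{2n}`. -/
def sphereMeasure (n : ℕ) : Measure (sphere (0 : E n) 1) :=
  ((volume : Measure (E n)).toSphere Set.univ)⁻¹ • (volume : Measure (E n)).toSphere

/-- The mean width parameter `M*(K) = ∫_{S^{2n-1}} h_K dσ`. -/
def meanWidth (n : ℕ) (K : Set (E n)) : ℝ :=
  ∫ x : sphere (0 : E n) 1, suppFn n K (x : E n) ∂(sphereMeasure n)

/-! ## The complex structure -/

def flipIdx (n : ℕ) (i : Fin (2 * n)) : Fin (2 * n) :=
  if _h : i.val % 2 = 0 then ⟨i.val + 1, by have := i.isLt; omega⟩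
  else ⟨i.val - 1, by have := i.isLt; omega⟩

lemma flipIdx_flip (n : ℕ) (i : Fin (2 * n)) : flipIdx n (flipIdx n i) = i := by
  apply Fin.ext
  unfold flipIdx
  by_cases h : i.val % 2 = 0
  · have : ¬ ((i.val + 1) % 2 = 0) := by omega
    simp [h, this]
  · have : (i.val - 1) % 2 = 0 := by omega
    simp [h, this]
    omega

def sgnIdx (n : ℕ) (i : Fin (2 * n)) : ℝ := if i.val % 2 = 0 then -1 else 1

lemma sgnIdx_flip (n : ℕ) (i : Fin (2 * n)) : sgnIdx n (flipIdx n i) = - sgnIdx n i := by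
  unfold sgnIdx flipIdx
  by_cases h : i.val % 2 = 0
  · have : ¬ ((i.val + 1) % 2 = 0) := by omega
    simp [h, this]
  · have : (i.val - 1) % 2 = 0 := by omega
    simp [h, this]

lemma Jmap_apply (n : ℕ) (v : E n) (i : Fin (2 * n)) :
    Jmap n v i = sgnIdx n i * v (flipIdx n i) := by
  unfold Jmap sgnIdx flipIdx
  by_cases h : i.val % 2 = 0 <;> simp [h]

lemma Jmap_add (n : ℕ) (v w : E n) : Jmap n (v + w) = Jmap n v + Jmap n w := by
  ext i; simp [Jmap_apply, mul_add]

lemma Jmap_smul (n : ℕ) (c : ℝ) (v : E n) : Jmap n (c • v) = c • Jmap n v := by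
  ext i; simp [Jmap_apply]; ring

lemma Jmap_Jmap (n : ℕ) (v : E n) : Jmap n (Jmap n v) = -v := by
  ext i
  simp only [Jmap_apply, flipIdx_flip, sgnIdx_flip, PiLp.neg_apply]
  unfold sgnIdx
  split_ifs <;> ring

def JL (n : ℕ) : E n →ₗ[ℝ] E n where
  toFun := Jmap n
  map_add' := Jmap_add n
  map_smul' := fun c v => by simpa using Jmap_smul n c v

def JC (n : ℕ) : E n →L[ℝ] E n := LinearMap.toContinuousLinearMap (JL n)

@[simp] lemma JC_apply (n : ℕ) (v : E n) : JC n v = Jmap n v := rfl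

lemma Jmap_neg (n : ℕ) (v : E n) : Jmap n (-v) = -Jmap n v := map_neg (JL n) v
lemma Jmap_sub (n : ℕ) (v w : E n) : Jmap n (v - w) = Jmap n v - Jmap n w := map_sub (JL n) v w
lemma Jmap_zero (n : ℕ) : Jmap n 0 = 0 := map_zero (JL n)
lemma Jmap_sum (n : ℕ) {ι : Type*} (s : Finset ι) (v : ι → E n) :
    Jmap n (∑ i ∈ s, v i) = ∑ i ∈ s, Jmap n (v i) := map_sum (JL n) v s
lemma Jmap_continuous (n : ℕ) : Continuous (Jmap n) := (JC n).continuous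

lemma Jmap_inner (n : ℕ) (v w : E n) : ⟪Jmap n v, w⟫_ℝ = - ⟪v, Jmap n w⟫_ℝ := by
  simp only [PiLp.inner_apply, Jmap_apply]
  rw [← Finset.sum_neg_distrib]
  let e : Equiv.Perm (Fin (2 * n)) := ⟨flipIdx n, flipIdx n, flipIdx_flip n, flipIdx_flip n⟩
  rw [← Equiv.sum_comp e]
  apply Finset.sum_congr rfl
  intro i _
  change ⟪sgnIdx n (flipIdx n i) * v (flipIdx n (flipIdx n i)), w (flipIdx n i)⟫_ℝ = _
  rw [flipIdx_flip, sgnIdx_flip]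
  simp
  ring

lemma Jmap_inner_Jmap (n : ℕ) (v w : E n) : ⟪Jmap n v, Jmap n w⟫_ℝ = ⟪v, w⟫_ℝ := by
  rw [Jmap_inner, Jmap_Jmap]; simp

lemma Jmap_norm (n : ℕ) (v : E n) : ‖Jmap n v‖ = ‖v‖ := by
  rw [norm_eq_sqrt_real_inner, norm_eq_sqrt_real_inner, Jmap_inner_Jmap]

lemma Jmap_inner_self (n : ℕ) (v : E n) : ⟪Jmap n v, v⟫_ℝ = 0 := by
  have h := Jmap_inner n v v
  rw [real_inner_comm v (Jmap n v)] at h ⊢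
  linarith

/-! ## Support functions and gauges -/

section body
variable {n : ℕ} {K : Set (E n)}

lemma supp_bdd (hK : IsCompact K) (u : E n) : BddAbove ((fun x => ⟪x, u⟫_ℝ) '' K) :=
  (hK.image (by fun_prop)).bddAbove

lemma le_supp (hK : IsCompact K) {x : E n} (hx : x ∈ K) (u : E n) : ⟪x, u⟫_ℝ ≤ suppFn n K u :=
  le_csSup (supp_bdd hK u) ⟨x, hx, rfl⟩

lemma supp_le (hne : K.Nonempty) {u : E n} {b : ℝ} (h : ∀ x ∈ K, ⟪x, u⟫_ℝ ≤ b) :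
    suppFn n K u ≤ b := by
  apply csSup_le (hne.image _)
  rintro _ ⟨x, hx, rfl⟩
  exact h x hx

lemma supp_nonneg (hK : IsCompact K) (h0 : (0 : E n) ∈ K) (u : E n) : 0 ≤ suppFn n K u := by
  have := le_supp hK h0 u
  simpa using this

lemma supp_add_le (hK : IsCompact K) (h0 : (0 : E n) ∈ K) (u v : E n) :
    suppFn n K (u + v) ≤ suppFn n K u + suppFn n K v := by
  apply supp_le ⟨0, h0⟩
  intro x hx
  rw [inner_add_right]
  exact add_le_add (le_supp hK hx u) (le_supp hK hx v)

lemma supp_smul (hK : IsCompact K) (h0 : (0 : E n) ∈ K) {c : ℝ} (hc : 0 ≤ c) (u : E n) :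
    suppFn n K (c • u) = c * suppFn n K u := by
  have key : ∀ (c : ℝ), 0 ≤ c → ∀ u : E n, suppFn n K (c • u) ≤ c * suppFn n K u := by
    intro c hc u
    apply supp_le ⟨0, h0⟩
    intro x hx
    rw [inner_smul_right]
    exact mul_le_mul_of_nonneg_left (le_supp hK hx u) hc
  apply le_antisymm (key c hc u)
  rcases hc.eq_or_lt with rfl | hc'
  · simpa using supp_nonneg hK h0 _
  have := key c⁻¹ (by positivity) (c • u)
  rw [smul_smul, inv_mul_cancel₀ hc'.ne', one_smul] at this
  calc c * suppFn n K u ≤ c * (c⁻¹ * suppFn n K (c • u)) := by gcongr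
    _ = _ := by field_simp

lemma exists_supp_le (hK : IsCompact K) (h0 : (0 : E n) ∈ K) :
    ∃ R : ℝ, 0 < R ∧ ∀ u, suppFn n K u ≤ R * ‖u‖ := by
  obtain ⟨R, hR⟩ := hK.isBounded.exists_pos_norm_le
  refine ⟨R, hR.1, fun u => supp_le ⟨0, h0⟩ fun x hx => ?_⟩
  exact (real_inner_le_norm x u).trans (mul_le_mul_of_nonneg_right (hR.2 x hx) (norm_nonneg _))

lemma exists_le_supp (hK : IsCompact K) (h0 : (0 : E n) ∈ interior K) :
    ∃ C : ℝ, 0 < C ∧ ∀ u, ‖u‖ ≤ C * suppFn n K u := by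
  obtain ⟨r, hr, hb⟩ := Metric.isOpen_iff.1 isOpen_interior 0 h0
  refine ⟨2 / r, by positivity, fun u => ?_⟩
  by_cases hu : u = 0
  · have := supp_nonneg hK (interior_subset h0) u
    rw [hu] at this ⊢
    rw [norm_zero]; positivity
  have hn : 0 < ‖u‖ := norm_pos_iff.2 hu
  have hx : ((r / 2) * ‖u‖⁻¹) • u ∈ K := by
    apply interior_subset (hb _)
    rw [mem_ball_zero_iff, norm_smul, norm_mul, norm_inv, norm_norm, mul_assoc,
      inv_mul_cancel₀ hn.ne', Real.norm_of_nonneg (by positivity)]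
    linarith
  have := le_supp hK hx u
  rw [real_inner_smul_left, real_inner_self_eq_norm_sq] at this
  have h2 : r / 2 * ‖u‖⁻¹ * ‖u‖ ^ 2 = r / 2 * ‖u‖ := by field_simp
  rw [h2] at this
  calc ‖u‖ = 2 / r * (r / 2 * ‖u‖) := by field_simp
    _ ≤ _ := by gcongr

lemma supp_continuous (hK : IsCompact K) (h0 : (0 : E n) ∈ K) : Continuous (suppFn n K) := by
  obtain ⟨R, hR, hb⟩ := exists_supp_le hK h0
  have : LipschitzWith (Real.toNNReal R) (suppFn n K) := by
    apply LipschitzWith.of_le_add_mul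
    intro x y
    rw [Real.coe_toNNReal _ hR.le, dist_eq_norm]
    have := supp_add_le hK h0 y (x - y)
    rw [add_sub_cancel] at this
    linarith [hb (x - y)]
  exact this.continuous

lemma supp_add_set {T : Set (E n)} (hK : IsCompact K) (h0 : (0 : E n) ∈ K)
    (hT : IsCompact T) (h0T : (0 : E n) ∈ T) {ε : ℝ} (hε : 0 ≤ ε) (u : E n) :
    suppFn n (K + ε • T) u = suppFn n K u + ε * suppFn n T u := by
  have hc : IsCompact (K + ε • T) := hK.add (hT.smul ε)
  apply le_antisymm
  · apply supp_le ⟨0 + ε • 0, Set.add_mem_add h0 (Set.smul_mem_smul_set h0T)⟩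
    rintro _ ⟨x, hx, _, ⟨y, hy, rfl⟩, rfl⟩
    simp only [inner_add_left, real_inner_smul_left]
    have := mul_le_mul_of_nonneg_left (le_supp hT hy u) hε
    linarith [le_supp hK hx u]
  · rw [← supp_smul hT h0T hε]
    have : suppFn n T (ε • u) ≤ suppFn n (K + ε • T) u - suppFn n K u := by
      apply supp_le ⟨0, h0T⟩
      intro y hy
      rw [le_sub_comm]
      apply supp_le ⟨0, h0⟩
      intro x hx
      have := le_supp hc (Set.add_mem_add hx (Set.smul_mem_smul_set (a := ε) hy)) u
      rw [inner_add_left, real_inner_smul_left] at this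
      rw [inner_smul_right]
      linarith
    linarith

lemma body_nhds (h0 : (0 : E n) ∈ interior K) : K ∈ 𝓝 (0 : E n) := mem_interior_iff_mem_nhds.1 h0

lemma inner_le_gauge_supp (hK : IsCompact K) (h0 : (0 : E n) ∈ interior K)
    (q w : E n) : ⟪q, w⟫_ℝ ≤ gauge K q * suppFn n K w := by
  have habs := absorbent_nhds_zero (𝕜 := ℝ) (body_nhds h0)
  have hw := supp_nonneg hK (interior_subset h0) w
  have key : ∀ r, gauge K q < r → ⟪q, w⟫_ℝ ≤ r * suppFn n K w := by
    intro r hr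
    obtain ⟨b, hb0, hbr, hx⟩ := exists_lt_of_gauge_lt habs hr
    obtain ⟨y, hy, rfl⟩ := hx
    simp only [real_inner_smul_left]
    calc b * ⟪y, w⟫_ℝ ≤ b * suppFn n K w := by gcongr; exact le_supp hK hy w
      _ ≤ _ := by gcongr
  have ht : Tendsto (fun r => r * suppFn n K w) (𝓝[>] (gauge K q)) (𝓝 (gauge K q * suppFn n K w)) :=
    ((continuous_id.mul continuous_const).tendsto _).mono_left nhdsWithin_le_nhds
  exact ge_of_tendsto ht (by filter_upwards [self_mem_nhdsWithin] with r hr using key r hr)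

end body
/-! ## The squared gauge and its gradient -/

section gaugeSq
variable {n : ℕ} {K : Set (E n)}

/-- the gradient of the squared gauge -/
def gradF (n : ℕ) (K : Set (E n)) (x : E n) : E n := gradient (fun x => gauge K x ^ 2) x

lemma gaugeSq_differentiableAt (h0 : (0 : E n) ∈ interior K) (hs : HasSmoothBoundary n K)
    (x : E n) : DifferentiableAt ℝ (fun x => gauge K x ^ 2) x := by
  by_cases hx : x = 0
  · subst hx
    obtain ⟨r, hr, hb⟩ := Metric.isOpen_iff.1 isOpen_interior 0 h0
    have hb' : Metric.ball (0 : E n) r ⊆ K := hb.trans interior_subset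
    have hO : (fun x : E n => gauge K x ^ 2) =O[𝓝 0] fun x => ‖x - 0‖ ^ 2 := by
      apply Asymptotics.IsBigO.of_bound ((1 / r) ^ 2)
      filter_upwards with x
      have h1 : gauge K x ≤ 1 / r * ‖x‖ := by
        have := mul_gauge_le_norm hb' (x := x)
        rw [one_div, ← div_eq_inv_mul, le_div_iff₀ hr]; linarith
      rw [sub_zero, Real.norm_of_nonneg (by positivity), Real.norm_of_nonneg (by positivity),
        ← mul_pow]
      exact pow_le_pow_left₀ (gauge_nonneg x) h1 2
    exact (hO.hasFDerivAt (by norm_num)).differentiableAt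
  · have h1 : ContDiffAt ℝ 1 (gauge K) x := hs.contDiffAt (isOpen_compl_singleton.mem_nhds hx)
    exact (h1.differentiableAt (by norm_num)).pow 2

lemma gaugeSq_hasFDerivAt (h0 : (0 : E n) ∈ interior K) (hs : HasSmoothBoundary n K)
    (x : E n) : HasFDerivAt (fun x => gauge K x ^ 2) (innerSL ℝ (gradF n K x)) x := by
  have := (gaugeSq_differentiableAt h0 hs x).hasGradientAt.hasFDerivAt
  exact this

lemma gaugeSq_hasDerivAt (h0 : (0 : E n) ∈ interior K) (hs : HasSmoothBoundary n K)
    (p x : E n) :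
    HasDerivAt (fun s : ℝ => gauge K (p + s • x) ^ 2) ⟪gradF n K p, x⟫_ℝ 0 := by
  have h1 : HasDerivAt (fun s : ℝ => p + s • x) x 0 := by
    simpa using ((hasDerivAt_id (0 : ℝ)).smul_const x).const_add p
  have h2 := gaugeSq_hasFDerivAt h0 hs (p + (0 : ℝ) • x)
  have h3 := h2.comp_hasDerivAt (0 : ℝ) h1
  have h4 : HasDerivAt (fun s : ℝ => gauge K (p + s • x) ^ 2)
      (innerSL ℝ (gradF n K (p + (0 : ℝ) • x)) x) 0 := h3
  simpa using h4

/-- Comparison of right derivatives. -/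
lemma deriv_le_of_le {φ ψ : ℝ → ℝ} {a b : ℝ} (hφ : HasDerivAt φ a 0) (hψ : HasDerivAt ψ b 0)
    (h0 : φ 0 = ψ 0) (h : ∀ s, 0 < s → φ s ≤ ψ s) : a ≤ b := by
  have h1 := (hasDerivAt_iff_tendsto_slope.1 hφ).mono_left
    (nhdsWithin_mono (0 : ℝ) (fun x (hx : x ∈ Ioi (0 : ℝ)) => ne_of_gt hx))
  have h2 := (hasDerivAt_iff_tendsto_slope.1 hψ).mono_left
    (nhdsWithin_mono (0 : ℝ) (fun x (hx : x ∈ Ioi (0 : ℝ)) => ne_of_gt hx))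
  refine le_of_tendsto_of_tendsto h1 h2 ?_
  filter_upwards [self_mem_nhdsWithin] with s hs
  have hs' : 0 < s := hs
  rw [slope_def_field, slope_def_field, h0, sub_zero]
  gcongr
  exact h s hs

lemma supp_gradF_le (hc : Convex ℝ K) (h0 : (0 : E n) ∈ interior K)
    (hs : HasSmoothBoundary n K) (p : E n) : suppFn n K (gradF n K p) ≤ 2 * gauge K p := by
  have habs := absorbent_nhds_zero (𝕜 := ℝ) (body_nhds h0)
  apply supp_le ⟨0, interior_subset h0⟩
  intro x hx
  rw [real_inner_comm]
  have hψ : HasDerivAt (fun s : ℝ => (gauge K p + s) ^ 2) (2 * gauge K p) 0 := by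
    have := ((hasDerivAt_id (0 : ℝ)).const_add (gauge K p)).fun_pow 2
    simpa using this
  refine deriv_le_of_le (gaugeSq_hasDerivAt h0 hs p x) hψ (by simp) ?_
  intro s hs
  apply pow_le_pow_left₀ (gauge_nonneg _)
  refine (gauge_add_le hc habs _ _).trans ?_
  rw [gauge_smul_of_nonneg hs.le, smul_eq_mul]
  have := mul_le_mul_of_nonneg_left (gauge_le_one_of_mem hx) hs.le
  linarith

lemma inner_gradF_self (h0 : (0 : E n) ∈ interior K)
    (hs : HasSmoothBoundary n K) (p : E n) : ⟪gradF n K p, p⟫_ℝ = 2 * gauge K p ^ 2 := by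
  have h1 := gaugeSq_hasDerivAt h0 hs p p
  have h2 : HasDerivAt (fun s : ℝ => (1 + s) ^ 2 * gauge K p ^ 2) (2 * gauge K p ^ 2) 0 := by
    have := (((hasDerivAt_id (0 : ℝ)).const_add 1).fun_pow 2).mul_const (gauge K p ^ 2)
    simpa using this
  refine h1.unique (h2.congr_of_eventuallyEq ?_)
  filter_upwards [Ioi_mem_nhds (show (-1 : ℝ) < 0 by norm_num)] with s hs
  have : p + s • p = (1 + s) • p := by rw [add_smul, one_smul]
  have hs' : (-1 : ℝ) < s := hs
  rw [this, gauge_smul_of_nonneg (by linarith : (0 : ℝ) ≤ 1 + s), smul_eq_mul, mul_pow]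

lemma supp_gradF (hK : IsCompact K) (hc : Convex ℝ K) (h0 : (0 : E n) ∈ interior K)
    (hs : HasSmoothBoundary n K) (p : E n) : suppFn n K (gradF n K p) = 2 * gauge K p := by
  apply le_antisymm (supp_gradF_le hc h0 hs p)
  have h1 := inner_le_gauge_supp hK h0 p (gradF n K p)
  rw [real_inner_comm, inner_gradF_self h0 hs] at h1
  rcases (gauge_nonneg (s := K) p).eq_or_lt with h | h
  · rw [← h]; simpa using supp_nonneg hK (interior_subset h0) _
  · nlinarith

lemma gradF_unique (h0 : (0 : E n) ∈ interior K) (hs : HasSmoothBoundary n K) (p v : E n)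
    (h : ∀ q, ⟪q - p, v⟫_ℝ ≤ gauge K q ^ 2 - gauge K p ^ 2) : v = gradF n K p := by
  have key : ∀ x, ⟪v, x⟫_ℝ ≤ ⟪gradF n K p, x⟫_ℝ := by
    intro x
    have h2 : HasDerivAt (fun s : ℝ => gauge K p ^ 2 + s * ⟪v, x⟫_ℝ) ⟪v, x⟫_ℝ 0 := by
      simpa using ((hasDerivAt_id (0 : ℝ)).mul_const ⟪v, x⟫_ℝ).const_add (gauge K p ^ 2)
    refine deriv_le_of_le h2 (gaugeSq_hasDerivAt h0 hs p x) (by simp) ?_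
    intro s _
    have := h (p + s • x)
    rw [add_sub_cancel_left, real_inner_smul_left, real_inner_comm] at this
    linarith
  apply ext_inner_right ℝ
  intro x
  apply le_antisymm (key x)
  have := key (-x)
  rw [inner_neg_right, inner_neg_right] at this
  linarith

lemma gradF_smul (h0 : (0 : E n) ∈ interior K) (hs : HasSmoothBoundary n K) {c : ℝ} (hc : 0 < c)
    (p : E n) : gradF n K (c • p) = c • gradF n K p := by
  apply ext_inner_right ℝ
  intro x
  have h1 := gaugeSq_hasDerivAt h0 hs (c • p) (c • x)
  have h2 := (gaugeSq_hasDerivAt h0 hs p x).const_mul (c ^ 2)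
  have h3 : (fun s : ℝ => gauge K (c • p + s • c • x) ^ 2) =
      fun s : ℝ => c ^ 2 * gauge K (p + s • x) ^ 2 := by
    funext s
    have : c • p + s • c • x = c • (p + s • x) := by
      rw [smul_add, smul_comm]
    rw [this, gauge_smul_of_nonneg hc.le, smul_eq_mul, mul_pow]
  rw [h3] at h1
  have := h1.unique h2
  rw [inner_smul_right] at this
  rw [real_inner_smul_left]
  have h4 : c * (⟪gradF n K (c • p), x⟫_ℝ - c * ⟪gradF n K p, x⟫_ℝ) = 0 := by linarith
  rcases mul_eq_zero.1 h4 with h | h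
  · exact absurd h hc.ne'
  · linarith

lemma gradF_norm_le (hK : IsCompact K) (hc : Convex ℝ K) (h0 : (0 : E n) ∈ interior K)
    (hs : HasSmoothBoundary n K) :
    ∃ C : ℝ, 0 < C ∧ ∀ p, ‖gradF n K p‖ ≤ C * gauge K p := by
  obtain ⟨C, hC, h⟩ := exists_le_supp hK h0
  refine ⟨C * 2, by positivity, fun p => (h _).trans ?_⟩
  rw [supp_gradF hK hc h0 hs]
  linarith

lemma gradF_continuous (hK : IsCompact K) (hc : Convex ℝ K) (h0 : (0 : E n) ∈ interior K)
    (hs : HasSmoothBoundary n K) : Continuous (gradF n K) := by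
  rw [continuous_iff_continuousAt]
  intro x
  by_cases hx : x = 0
  · subst hx
    obtain ⟨C, hC, h⟩ := gradF_norm_le hK hc h0 hs
    have hz : gradF n K 0 = 0 := by
      have := h 0
      rw [gauge_zero, mul_zero] at this
      exact norm_le_zero_iff.1 this
    rw [ContinuousAt, hz]
    refine squeeze_zero_norm h ?_
    have := ((continuous_gauge hc (body_nhds h0)).const_mul C).tendsto 0
    simpa using this
  · have h2 : ContDiffOn ℝ 1 (fun x => gauge K x ^ 2) {(0 : E n)}ᶜ := hs.pow 2
    have h3 := h2.continuousOn_fderiv_of_isOpen isOpen_compl_singleton (by norm_num)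
    have h4 := h3.continuousAt (isOpen_compl_singleton.mem_nhds hx)
    exact (LinearIsometryEquiv.continuous _).continuousAt.comp h4

end gaugeSq

/-! ## The discrete problem -/

section discrete
variable {n m : ℕ} {K : Set (E n)}

def sg (i j : Fin (m + 1)) : ℝ := if j < i then 1 else if i < j then -1 else 0

lemma sg_antisymm (i j : Fin (m + 1)) : sg j i = - sg i j := by
  unfold sg
  rcases lt_trichotomy i j with h | h | h
  · simp [h, h.not_gt]
  · simp [h]
  · simp [h, h.not_gt]

lemma sg_abs (i j : Fin (m + 1)) : |sg i j| ≤ 1 := by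
  unfold sg
  split_ifs <;> simp

lemma sg_succ (i j : Fin (m + 1)) : sg (i + 1) j - sg i j =
    (if j = i then 1 else 0) + (if j = i + 1 then 1 else 0) - (if i = Fin.last m then 2 else 0) := by
  have hv := Fin.val_add_one i
  unfold sg
  simp only [Fin.lt_def, Fin.ext_iff, Fin.val_last] at *
  rw [hv]
  have hi := i.isLt
  have hj := j.isLt
  split_ifs <;> first | omega | norm_num

def Dv (u : Fin (m + 1) → E n) (i : Fin (m + 1)) : E n := ∑ j, sg i j • u j

def beta (u w : Fin (m + 1) → E n) : ℝ := ∑ i, ⟪Jmap n (Dv u i), w i⟫_ℝ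

lemma beta_eq (u w : Fin (m + 1) → E n) :
    beta u w = ∑ i, ∑ j, sg i j * ⟪Jmap n (u j), w i⟫_ℝ := by
  unfold beta Dv
  simp_rw [Jmap_sum, Jmap_smul, sum_inner, real_inner_smul_left]

lemma beta_symm (u w : Fin (m + 1) → E n) : beta u w = beta w u := by
  rw [beta_eq, beta_eq, Finset.sum_comm]
  refine Finset.sum_congr rfl fun i _ => Finset.sum_congr rfl fun j _ => ?_
  rw [sg_antisymm, Jmap_inner, real_inner_comm]
  ring

lemma beta_add_smul (u w : Fin (m + 1) → E n) (s : ℝ) :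
    beta (u + s • w) (u + s • w) = beta u u + 2 * s * beta u w + s ^ 2 * beta w w := by
  have h1 : beta (u + s • w) (u + s • w)
      = beta u u + s * beta u w + s * beta w u + s ^ 2 * beta w w := by
    simp only [beta_eq, Finset.mul_sum, ← Finset.sum_add_distrib]
    refine Finset.sum_congr rfl fun i _ => Finset.sum_congr rfl fun j _ => ?_
    simp only [Pi.add_apply, Pi.smul_apply, Jmap_add, Jmap_smul, inner_add_left, inner_add_right,
      real_inner_smul_left, inner_smul_right]
    ring
  rw [h1, beta_symm w u]; ring

lemma beta_smul (u : Fin (m + 1) → E n) (s : ℝ) : beta (s • u) (s • u) = s ^ 2 * beta u u := by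
  have h := beta_add_smul (0 : Fin (m + 1) → E n) u s
  have h0 : ∀ w : Fin (m + 1) → E n, beta 0 w = 0 := by
    intro w; simp [beta_eq, Jmap_zero]
  rw [zero_add, h0, h0] at h
  linarith

lemma beta_continuous : Continuous fun u : Fin (m + 1) → E n => beta u u := by
  simp only [beta_eq]
  have := Jmap_continuous n
  fun_prop

lemma beta_le (u : Fin (m + 1) → E n) : beta u u ≤ (∑ i, ‖u i‖) ^ 2 := by
  rw [beta_eq, pow_two, Finset.sum_mul_sum]
  refine Finset.sum_le_sum fun i _ => Finset.sum_le_sum fun j _ => ?_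
  calc sg i j * ⟪Jmap n (u j), u i⟫_ℝ ≤ |sg i j * ⟪Jmap n (u j), u i⟫_ℝ| := le_abs_self _
    _ = |sg i j| * |⟪Jmap n (u j), u i⟫_ℝ| := abs_mul _ _
    _ ≤ 1 * (‖Jmap n (u j)‖ * ‖u i‖) :=
        mul_le_mul (sg_abs i j) (abs_real_inner_le_norm _ _) (abs_nonneg _) zero_le_one
    _ = _ := by rw [Jmap_norm]; ring

def Phi (K : Set (E n)) (u : Fin (m + 1) → E n) : ℝ := ∑ i, suppFn n K (u i) ^ 2

lemma Phi_nonneg (u : Fin (m + 1) → E n) : 0 ≤ Phi K u :=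
  Finset.sum_nonneg fun _ _ => sq_nonneg _

lemma Phi_smul (hK : IsCompact K) (h0 : (0 : E n) ∈ K) {c : ℝ} (hc : 0 ≤ c)
    (u : Fin (m + 1) → E n) : Phi K (c • u) = c ^ 2 * Phi K u := by
  unfold Phi
  rw [Finset.mul_sum]
  refine Finset.sum_congr rfl fun i _ => ?_
  rw [Pi.smul_apply, supp_smul hK h0 hc]; ring

lemma sum_norm_sq_le {C : ℝ} (hC : 0 < C) (h : ∀ u, ‖u‖ ≤ C * suppFn n K u)
    (u : Fin (m + 1) → E n) : (∑ i, ‖u i‖) ^ 2 ≤ C ^ 2 * (m + 1) * Phi K u := by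
  have h1 : ∑ i, ‖u i‖ ≤ C * ∑ i, suppFn n K (u i) := by
    rw [Finset.mul_sum]; exact Finset.sum_le_sum fun i _ => h (u i)
  have h2 := sq_sum_le_card_mul_sum_sq (s := Finset.univ) (f := fun i => suppFn n K (u i))
  have h3 : (∑ i, ‖u i‖) ^ 2 ≤ (C * ∑ i, suppFn n K (u i)) ^ 2 :=
    pow_le_pow_left₀ (Finset.sum_nonneg fun _ _ => norm_nonneg _) h1 2
  rw [Finset.card_univ, Fintype.card_fin] at h2
  push_cast at h2
  calc _ ≤ C ^ 2 * (∑ i, suppFn n K (u i)) ^ 2 := by rw [← mul_pow]; exact h3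
    _ ≤ C ^ 2 * ((m + 1) * Phi K u) := by gcongr; exact h2
    _ = _ := by ring

lemma Phi_sqrt_add (hK : IsCompact K) (h0 : (0 : E n) ∈ K) (u w : Fin (m + 1) → E n) :
    √(Phi K (u + w)) ≤ √(Phi K u) + √(Phi K w) := by
  have hn : ∀ u : Fin (m + 1) → E n,
      √(Phi K u) = ‖(WithLp.toLp 2 fun i => suppFn n K (u i) : EuclideanSpace ℝ (Fin (m + 1)))‖ := by
    intro u
    rw [EuclideanSpace.norm_eq]
    simp [Phi]
  rw [hn u, hn w]
  refine le_trans ?_ (norm_add_le _ _)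
  rw [EuclideanSpace.norm_eq]
  apply Real.sqrt_le_sqrt
  unfold Phi
  refine Finset.sum_le_sum fun i _ => ?_
  simp only [PiLp.add_apply, Real.norm_eq_abs, sq_abs]
  exact pow_le_pow_left₀ (supp_nonneg hK h0 _) (supp_add_le hK h0 _ _) 2

lemma discrete_min (hK : IsCompact K) (h0 : (0 : E n) ∈ interior K)
    (u0 : Fin (m + 1) → E n) (hs : ∑ i, u0 i = 0) (hb : 0 < beta u0 u0) :
    ∃ u : Fin (m + 1) → E n, ∑ i, u i = 0 ∧ beta u u = 4 ∧
      ∀ w : Fin (m + 1) → E n, ∑ i, w i = 0 → Phi K u * beta w w ≤ 4 * Phi K w := by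
  have h0' := interior_subset h0
  obtain ⟨C, hC, hCb⟩ := exists_le_supp hK h0
  have hscale : ∀ w : Fin (m + 1) → E n, ∑ i, w i = 0 → 0 < beta w w →
      ∃ c : ℝ, 0 < c ∧ c ^ 2 * beta w w = 4 ∧ ∑ i, (c • w) i = 0 ∧ beta (c • w) (c • w) = 4 := by
    intro w hw hbw
    have hc : (√(4 / beta w w)) ^ 2 * beta w w = 4 := by
      rw [Real.sq_sqrt (by positivity)]; field_simp
    refine ⟨√(4 / beta w w), by positivity, hc, ?_, by rw [beta_smul]; exact hc⟩
    simp only [Pi.smul_apply, ← Finset.smul_sum, hw, smul_zero]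
  obtain ⟨c1, hc1, -, hsum1, hbeta1⟩ := hscale u0 hs hb
  have hcont : Continuous (Phi K : (Fin (m + 1) → E n) → ℝ) := by
    unfold Phi
    have := supp_continuous hK h0'
    fun_prop
  let S : Set (Fin (m + 1) → E n) :=
    {u | ∑ i, u i = 0 ∧ beta u u = 4 ∧ Phi K u ≤ Phi K (c1 • u0)}
  have hScl : IsClosed S := by
    refine IsClosed.inter (isClosed_eq (by fun_prop) continuous_const) (IsClosed.inter ?_ ?_)
    · exact isClosed_eq beta_continuous continuous_const
    · exact isClosed_le hcont continuous_const
  have hSb : Bornology.IsBounded S := by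
    rw [isBounded_iff_forall_norm_le]
    refine ⟨C * √(Phi K (c1 • u0)), fun u hu => ?_⟩
    rw [pi_norm_le_iff_of_nonneg (by positivity)]
    intro i
    refine (hCb _).trans ?_
    gcongr
    apply Real.le_sqrt_of_sq_le
    exact (Finset.single_le_sum (f := fun i => suppFn n K (u i) ^ 2)
      (fun _ _ => sq_nonneg _) (Finset.mem_univ i)).trans hu.2.2
  obtain ⟨u, hu, hmin⟩ := (Metric.isCompact_of_isClosed_isBounded hScl hSb).exists_isMinOn
    ⟨c1 • u0, hsum1, hbeta1, le_rfl⟩ hcont.continuousOn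
  refine ⟨u, hu.1, hu.2.1, fun w hw => ?_⟩
  by_cases hbw : 0 < beta w w
  · obtain ⟨c, hc, hc4, hcs, hcb⟩ := hscale w hw hbw
    have : Phi K u ≤ Phi K (c • w) := by
      by_cases hle : Phi K (c • w) ≤ Phi K (c1 • u0)
      · exact hmin ⟨hcs, hcb, hle⟩
      · exact hu.2.2.trans (not_le.1 hle).le
    rw [Phi_smul hK h0' hc.le] at this
    calc _ ≤ c ^ 2 * Phi K w * beta w w := by gcongr
      _ = (c ^ 2 * beta w w) * Phi K w := by ring
      _ = _ := by rw [hc4]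
  · have := mul_nonneg (Phi_nonneg (K := K) u) (neg_nonneg.2 (not_lt.1 hbw))
    have := Phi_nonneg (K := K) w
    linarith

/-- first order condition -/
lemma discrete_first_order (hK : IsCompact K) (h0 : (0 : E n) ∈ K)
    (u : Fin (m + 1) → E n) (hs : ∑ i, u i = 0) (hb : beta u u = 4) (hM : 0 < Phi K u)
    (hmin : ∀ w : Fin (m + 1) → E n, ∑ i, w i = 0 → Phi K u * beta w w ≤ 4 * Phi K w)
    (w : Fin (m + 1) → E n) (hw : ∑ i, w i = 0) :
    √(Phi K u) / 4 * beta u w ≤ √(Phi K w) := by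
  set M := Phi K u with hMdef
  have hsq : √M ^ 2 = M := Real.sq_sqrt hM.le
  have hsp : 0 < √M := Real.sqrt_pos.2 hM
  have hwq : √(Phi K w) ^ 2 = Phi K w := Real.sq_sqrt (Phi_nonneg w)
  have h1 : HasDerivAt (fun s : ℝ => M * (4 + 2 * s * beta u w + s ^ 2 * beta w w))
      (M * (2 * beta u w)) 0 := by
    have h := ((((hasDerivAt_id (0 : ℝ)).const_mul 2).mul_const (beta u w)).const_add 4).add
      (((hasDerivAt_id (0 : ℝ)).fun_pow 2).mul_const (beta w w))
    have h' := h.const_mul M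
    have h'' : HasDerivAt (fun s : ℝ => M * (4 + 2 * s * beta u w + s ^ 2 * beta w w)) _ 0 := h'
    simpa using h''
  have h2 : HasDerivAt (fun s : ℝ => 4 * (√M + s * √(Phi K w)) ^ 2)
      (4 * (2 * √M * √(Phi K w))) 0 := by
    have h := ((((hasDerivAt_id (0 : ℝ)).mul_const (√(Phi K w))).const_add (√M)).fun_pow 2).const_mul 4
    simpa using h
  have := deriv_le_of_le h1 h2 (by simp [hsq]; ring) ?_
  · have h3 : √M * (√M * beta u w - 4 * √(Phi K w)) ≤ 0 := by
      have e : √M * (√M * beta u w - 4 * √(Phi K w))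
          = √M ^ 2 * beta u w - 4 * (√M * √(Phi K w)) := by ring
      rw [e, hsq]; linarith
    have h4 : √M * beta u w - 4 * √(Phi K w) ≤ 0 := by
      by_contra hcon
      have := mul_pos hsp (not_le.1 hcon)
      linarith
    linarith
  · intro s hs'
    have hsum : ∑ i, (u + s • w) i = 0 := by
      simp only [Pi.add_apply, Pi.smul_apply, Finset.sum_add_distrib, ← Finset.smul_sum, hs, hw]
      simp
    have h5 := hmin _ hsum
    rw [beta_add_smul, hb] at h5
    refine h5.trans ?_
    have h6 := Phi_sqrt_add hK h0 u (s • w)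
    rw [Phi_smul hK h0 hs'.le, Real.sqrt_mul (sq_nonneg s), Real.sqrt_sq hs'.le] at h6
    have h7 := pow_le_pow_left₀ (Real.sqrt_nonneg _) h6 2
    rw [Real.sq_sqrt (Phi_nonneg _)] at h7
    linarith

end discrete

section discrete2
variable {n m : ℕ} {K : Set (E n)}

lemma Dv_succ (u : Fin (m + 1) → E n) (hs : ∑ i, u i = 0) (i : Fin (m + 1)) :
    Dv u (i + 1) - Dv u i = u i + u (i + 1) := by
  unfold Dv
  rw [← Finset.sum_sub_distrib]
  simp_rw [← sub_smul, sg_succ, sub_smul, add_smul, Finset.sum_sub_distrib,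
    Finset.sum_add_distrib, ← Finset.smul_sum, hs, smul_zero, sub_zero, ite_smul, one_smul, zero_smul]
  simp

lemma Dv_diff_norm (u : Fin (m + 1) → E n) (i j : Fin (m + 1)) :
    ‖Dv u j - Dv u i‖ ≤ 2 * ∑ k, ‖u k‖ := by
  have h : ∀ i, ‖Dv u i‖ ≤ ∑ k, ‖u k‖ := by
    intro i
    refine (norm_sum_le _ _).trans (Finset.sum_le_sum fun k _ => ?_)
    rw [norm_smul, Real.norm_eq_abs]
    exact mul_le_of_le_one_left (norm_nonneg _) (sg_abs i k)
  linarith [norm_sub_le (Dv u j) (Dv u i), h i, h j]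

/-- Hahn-Banach -/
lemma discrete_multiplier (hK : IsCompact K) (h0 : (0 : E n) ∈ K) (u : Fin (m + 1) → E n) (a : ℝ)
    (h : ∀ w : Fin (m + 1) → E n, ∑ i, w i = 0 → a * beta u w ≤ √(Phi K w)) :
    ∃ p : Fin (m + 1) → E n, (∀ w : Fin (m + 1) → E n, ∑ i, ⟪p i, w i⟫_ℝ ≤ √(Phi K w)) ∧
      (∀ w : Fin (m + 1) → E n, ∑ i, w i = 0 → ∑ i, ⟪p i, w i⟫_ℝ = a * beta u w) ∧
      ∀ i j, p j - p i = a • Jmap n (Dv u j - Dv u i) := by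
  classical
  let ℓ : (Fin (m + 1) → E n) →ₗ[ℝ] ℝ :=
    { toFun := fun w => a * beta u w
      map_add' := by
        intro x y
        simp only [beta, Pi.add_apply, inner_add_right, Finset.sum_add_distrib, mul_add]
      map_smul' := by
        intro c x
        simp only [beta, Pi.smul_apply, inner_smul_right, ← Finset.mul_sum, RingHom.id_apply,
          smul_eq_mul]
        ring }
  let V : Submodule ℝ (Fin (m + 1) → E n) :=
    LinearMap.ker (∑ i, (LinearMap.proj i : (Fin (m + 1) → E n) →ₗ[ℝ] E n))
  have hV : ∀ w, w ∈ V ↔ ∑ i, w i = 0 := by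
    intro w
    simp [V, LinearMap.mem_ker, LinearMap.sum_apply]
  obtain ⟨Λ, hΛ1, hΛ2⟩ := exists_extension_of_le_sublinear
    (⟨V, ℓ.comp V.subtype⟩ : (Fin (m + 1) → E n) →ₗ.[ℝ] ℝ) (fun w => √(Phi K w))
    (by
      intro c hc x
      rw [Phi_smul hK h0 hc.le, Real.sqrt_mul (sq_nonneg c), Real.sqrt_sq hc.le])
    (fun x y => Phi_sqrt_add hK h0 x y)
    (by
      rintro ⟨x, hx⟩
      exact h x ((hV x).1 hx))
  have hΛ1' : ∀ w, ∑ i, w i = 0 → Λ w = a * beta u w := by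
    intro w hw
    exact hΛ1 ⟨w, (hV w).2 hw⟩
  let p : Fin (m + 1) → E n := fun i => (InnerProductSpace.toDual ℝ (E n)).symm
    (LinearMap.toContinuousLinearMap (Λ.comp (LinearMap.single ℝ (fun _ => E n) i)))
  have hp : ∀ i x, ⟪p i, x⟫_ℝ = Λ (Pi.single i x) := by
    intro i x
    simp [p]
  have hpw : ∀ w : Fin (m + 1) → E n, ∑ i, ⟪p i, w i⟫_ℝ = Λ w := by
    intro w
    simp_rw [hp]
    rw [← map_sum, Finset.univ_sum_single]
  refine ⟨p, fun w => by rw [hpw]; exact hΛ2 w, fun w hw => by rw [hpw]; exact hΛ1' w hw, ?_⟩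
  intro i j
  apply ext_inner_right ℝ
  intro x
  have hb : ∀ k, beta u (Pi.single k x) = ⟪Jmap n (Dv u k), x⟫_ℝ := by
    intro k
    unfold beta
    rw [Finset.sum_eq_single k]
    · simp
    · intro b _ hbk
      simp [Pi.single_eq_of_ne hbk]
    · simp
  have h1 := hΛ1' (Pi.single j x - Pi.single i x) (by simp)
  rw [map_sub, ← hp, ← hp] at h1
  have h2 : beta u (Pi.single j x - Pi.single i x) =
      beta u (Pi.single j x) - beta u (Pi.single i x) := by
    simp only [beta, Pi.sub_apply, inner_sub_right, Finset.sum_sub_distrib]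
  rw [h2, hb, hb] at h1
  rw [inner_sub_left, real_inner_smul_left, Jmap_sub, inner_sub_left, h1]

/-- The minimiser solves a discrete Hamiltonian system. -/
lemma discrete_main (hK : IsCompact K) (hc : Convex ℝ K) (h0 : (0 : E n) ∈ interior K)
    (hsm : HasSmoothBoundary n K) {C : ℝ} (hC : 0 < C) (hCb : ∀ u, ‖u‖ ≤ C * suppFn n K u)
    (u0 : Fin (m + 1) → E n) (hs0 : ∑ i, u0 i = 0) (hb0 : 0 < beta u0 u0) :
    ∃ M : ℝ, 0 < M ∧ 4 ≤ C ^ 2 * (m + 1) * M ∧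
      (∀ w : Fin (m + 1) → E n, ∑ i, w i = 0 → M * beta w w ≤ 4 * Phi K w) ∧
      ∃ p : Fin (m + 1) → E n, ∑ i, gauge K (p i) ^ 2 = 1 ∧
        (∀ i, p (i + 1) - p i = (M / 8) • Jmap n (gradF n K (p i) + gradF n K (p (i + 1)))) ∧
        ∀ i j, ‖p j - p i‖ ≤ C * M * √(m + 1) := by
  have h0' := interior_subset h0
  obtain ⟨u, hs, hb, hmin⟩ := discrete_min hK h0 u0 hs0 hb0
  have hle := (beta_le u).trans (sum_norm_sq_le hC hCb u)
  rw [hb] at hle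
  have hM : 0 < Phi K u := by
    rcases (Phi_nonneg (K := K) u).eq_or_lt with h | h
    · rw [← h] at hle; norm_num at hle
    · exact h
  obtain ⟨p, hp1, hp2, hp3⟩ := discrete_multiplier hK h0' u (√(Phi K u) / 4)
    (fun w hw => discrete_first_order hK h0' u hs hb hM hmin w hw)
  have hsn := sum_norm_sq_le hC hCb u
  have hpu := hp2 u hs
  have hsumM : ∑ i, suppFn n K (u i) ^ 2 = Phi K u := rfl
  set M := Phi K u with hMdef
  set r := √M with hr
  have hrpos : 0 < r := Real.sqrt_pos.2 hM
  have hrsq : r ^ 2 = M := Real.sq_sqrt hM.le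
  rw [hb] at hpu
  have hpu' : ∑ i, ⟪p i, u i⟫_ℝ = r := by rw [hpu]; ring
  -- the dual norm is at most one
  have hF1 : ∑ i, gauge K (p i) ^ 2 ≤ 1 := by
    have h1 := hp1 (fun i => gradF n K (p i))
    have h2 : Phi K (fun i => gradF n K (p i)) = 4 * ∑ i, gauge K (p i) ^ 2 := by
      unfold Phi
      rw [Finset.mul_sum]
      refine Finset.sum_congr rfl fun i _ => ?_
      rw [supp_gradF hK hc h0 hsm]; ring
    have h3 : ∑ i, ⟪p i, gradF n K (p i)⟫_ℝ = 2 * ∑ i, gauge K (p i) ^ 2 := by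
      rw [Finset.mul_sum]
      refine Finset.sum_congr rfl fun i _ => ?_
      rw [real_inner_comm, inner_gradF_self h0 hsm]
    have hnn : 0 ≤ ∑ i, gauge K (p i) ^ 2 := Finset.sum_nonneg fun _ _ => sq_nonneg _
    rw [h2, h3] at h1
    set s := ∑ i, gauge K (p i) ^ 2
    have h4 : (2 * s) ^ 2 ≤ 4 * s := by
      have := pow_le_pow_left₀ (by positivity) h1 2
      rwa [Real.sq_sqrt (by positivity)] at this
    nlinarith
  have hterm : ∀ i, ⟪p i, u i⟫_ℝ ≤
      r / 2 * gauge K (p i) ^ 2 + 1 / (2 * r) * suppFn n K (u i) ^ 2 := by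
    intro i
    refine (inner_le_gauge_supp hK h0 (p i) (u i)).trans ?_
    have : r / 2 * gauge K (p i) ^ 2 + 1 / (2 * r) * suppFn n K (u i) ^ 2
        - gauge K (p i) * suppFn n K (u i)
        = 1 / (2 * r) * (r * gauge K (p i) - suppFn n K (u i)) ^ 2 := by
      field_simp; ring
    have h2 : 0 ≤ 1 / (2 * r) * (r * gauge K (p i) - suppFn n K (u i)) ^ 2 := by positivity
    linarith
  have hsumr : ∑ i, (r / 2 * gauge K (p i) ^ 2 + 1 / (2 * r) * suppFn n K (u i) ^ 2)
      = r / 2 * ∑ i, gauge K (p i) ^ 2 + r / 2 := by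
    rw [Finset.sum_add_distrib, ← Finset.mul_sum, ← Finset.mul_sum, hsumM, ← hrsq]
    field_simp
  have hFle := Finset.sum_le_sum (s := Finset.univ) (fun i _ => hterm i)
  rw [hpu', hsumr] at hFle
  have hF : ∑ i, gauge K (p i) ^ 2 = 1 := by
    apply le_antisymm hF1
    by_contra hcon
    have := mul_lt_mul_of_pos_left (not_le.1 hcon) (half_pos hrpos)
    linarith
  have heq := (Finset.sum_eq_sum_iff_of_le (s := Finset.univ) (fun i _ => hterm i)).1
    (by rw [hpu', hsumr, hF]; ring)
  have hu : ∀ i, u i = (r / 2) • gradF n K (p i) := by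
    intro i
    have e1 := heq i (Finset.mem_univ i)
    have e2 := inner_le_gauge_supp hK h0 (p i) (u i)
    have e3 : r / 2 * gauge K (p i) ^ 2 + 1 / (2 * r) * suppFn n K (u i) ^ 2
        - gauge K (p i) * suppFn n K (u i)
        = 1 / (2 * r) * (r * gauge K (p i) - suppFn n K (u i)) ^ 2 := by
      field_simp; ring
    have e4 : 1 / (2 * r) * (r * gauge K (p i) - suppFn n K (u i)) ^ 2 ≤ 0 := by linarith
    have e5 : (r * gauge K (p i) - suppFn n K (u i)) ^ 2 ≤ 0 := by
      by_contra hcon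
      have : 0 < 1 / (2 * r) * (r * gauge K (p i) - suppFn n K (u i)) ^ 2 :=
        mul_pos (by positivity) (not_le.1 hcon)
      linarith
    have e6 : suppFn n K (u i) = r * gauge K (p i) := by
      have := pow_eq_zero_iff (two_ne_zero) |>.1 (le_antisymm e5 (sq_nonneg _))
      linarith
    have e7 : ⟪p i, u i⟫_ℝ = r * gauge K (p i) ^ 2 := by
      rw [e1, e6]; field_simp; ring
    have e8 : (2 / r) • u i = gradF n K (p i) := by
      apply gradF_unique h0 hsm
      intro q
      rw [inner_smul_right, inner_sub_left, e7]
      have e9 := inner_le_gauge_supp hK h0 q (u i)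
      rw [e6] at e9
      have e10 : 2 / r * (⟪q, u i⟫_ℝ - r * gauge K (p i) ^ 2) ≤
          2 / r * (gauge K q * (r * gauge K (p i)) - r * gauge K (p i) ^ 2) := by gcongr
      refine e10.trans ?_
      have e11 : 2 / r * (gauge K q * (r * gauge K (p i)) - r * gauge K (p i) ^ 2)
          = 2 * gauge K q * gauge K (p i) - 2 * gauge K (p i) ^ 2 := by field_simp
      rw [e11]
      nlinarith [sq_nonneg (gauge K q - gauge K (p i))]
    rw [← e8, smul_smul]
    have : r / 2 * (2 / r) = 1 := by field_simp
    rw [this, one_smul]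
  refine ⟨M, hM, hle, hmin, p, hF, ?_, ?_⟩
  · intro i
    rw [hp3, Dv_succ u hs, hu i, hu (i + 1), ← smul_add, Jmap_smul, smul_smul]
    congr 1
    rw [← hrsq]; ring
  · intro i j
    rw [hp3, norm_smul, Jmap_norm, Real.norm_of_nonneg (by positivity)]
    have h1 := Dv_diff_norm u i j
    have h2 : ∑ k, ‖u k‖ ≤ C * √(m + 1) * r := by
      apply le_of_sq_le_sq _ (by positivity)
      rw [mul_pow, mul_pow, Real.sq_sqrt (by positivity), hrsq]
      exact hsn
    calc r / 4 * ‖Dv u j - Dv u i‖ ≤ r / 4 * (2 * (C * √(m + 1) * r)) := by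
          gcongr; linarith
      _ = C * r ^ 2 * √(m + 1) / 2 := by ring
      _ ≤ C * M * √(m + 1) := by
          rw [hrsq]
          have : 0 ≤ C * M * √(m + 1) := by positivity
          linarith

end discrete2

/-! ## Inscribed polygons -/

section inscribed
variable {n : ℕ} {K : Set (E n)}

lemma intervalIntegrable_inner {c f : ℝ → E n} (hc : Continuous c) {a b : ℝ}
    (hf : IntervalIntegrable f volume a b) :
    IntervalIntegrable (fun t => ⟪c t, f t⟫_ℝ) volume a b := by
  obtain ⟨B, hB⟩ := isCompact_uIcc.exists_bound_of_continuousOn (s := uIcc a b) hc.continuousOn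
  refine (hf.norm.const_mul B).mono_fun' ?_ ?_
  · exact hc.aestronglyMeasurable.inner hf.def'.aestronglyMeasurable
  · rw [Filter.EventuallyLE, ae_restrict_iff' measurableSet_uIoc]
    filter_upwards with t ht
    refine (norm_inner_le_norm (c t) (f t)).trans ?_
    exact mul_le_mul_of_nonneg_right (hB t (uIoc_subset_uIcc ht)) (norm_nonneg _)

lemma intervalIntegrable_supp (hK : IsCompact K) (h0 : (0 : E n) ∈ K) {f : ℝ → E n} {a b : ℝ}
    (hf : IntervalIntegrable f volume a b) :
    IntervalIntegrable (fun t => suppFn n K (f t)) volume a b := by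
  obtain ⟨R, hR, hRb⟩ := exists_supp_le hK h0
  refine (hf.norm.const_mul R).mono_fun' ?_ ?_
  · exact (supp_continuous hK h0).comp_aestronglyMeasurable hf.def'.aestronglyMeasurable
  · filter_upwards with t
    rw [Real.norm_of_nonneg (supp_nonneg hK h0 _)]
    exact hRb _

lemma supp_integral_le (hK : IsCompact K) (h0 : (0 : E n) ∈ K) {f : ℝ → E n} {a b : ℝ}
    (hab : a ≤ b) (hf : IntervalIntegrable f volume a b) :
    suppFn n K (∫ t in a..b, f t) ≤ ∫ t in a..b, suppFn n K (f t) := by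
  apply supp_le ⟨0, h0⟩
  intro x hx
  have h1 : ⟪x, ∫ t in a..b, f t⟫_ℝ = ∫ t in a..b, ⟪x, f t⟫_ℝ :=
    ((innerSL ℝ x).intervalIntegral_comp_comm hf).symm
  rw [h1]
  exact intervalIntegral.integral_mono_on hab (intervalIntegrable_inner continuous_const hf)
    (intervalIntegrable_supp hK h0 hf) fun t _ => le_supp hK hx (f t)

lemma InE_continuous {z dz : ℝ → E n} (hdz : ∀ a b : ℝ, IntervalIntegrable dz volume a b)
    (hz : ∀ t, z t = z 0 + ∫ s in (0:ℝ)..t, dz s) : Continuous z := by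
  have : z = fun t => z 0 + ∫ s in (0:ℝ)..t, dz s := funext hz
  rw [this]
  exact continuous_const.add (intervalIntegral.continuous_primitive hdz 0)

lemma InE_sub {z dz : ℝ → E n} (hdz : ∀ a b : ℝ, IntervalIntegrable dz volume a b)
    (hz : ∀ t, z t = z 0 + ∫ s in (0:ℝ)..t, dz s) (a b : ℝ) : z b - z a = ∫ s in a..b, dz s := by
  rw [hz b, hz a, add_sub_add_left_eq_sub, intervalIntegral.integral_interval_sub_left (hdz _ _) (hdz _ _)]

lemma chord_estimate (hK : IsCompact K) (h0 : (0 : E n) ∈ K) {C : ℝ} (hC : 0 < C)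
    (hCb : ∀ u, ‖u‖ ≤ C * suppFn n K u) {z dz : ℝ → E n}
    (hdz : ∀ a b : ℝ, IntervalIntegrable dz volume a b)
    (hz : ∀ t, z t = z 0 + ∫ s in (0:ℝ)..t, dz s) {a b : ℝ} (hab : a ≤ b) :
    |(∫ t in a..b, ⟪Jmap n (z t), dz t⟫_ℝ) - ⟪Jmap n (z a), z b - z a⟫_ℝ| ≤
      C ^ 2 * (∫ t in a..b, suppFn n K (dz t)) ^ 2 := by
  have hzc := InE_continuous hdz hz
  have hJc := Jmap_continuous n
  have h1 : ⟪Jmap n (z a), z b - z a⟫_ℝ = ∫ t in a..b, ⟪Jmap n (z a), dz t⟫_ℝ := by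
    rw [InE_sub hdz hz]
    exact ((innerSL ℝ (Jmap n (z a))).intervalIntegral_comp_comm (hdz a b)).symm
  have hi1 : IntervalIntegrable (fun t => ⟪Jmap n (z t), dz t⟫_ℝ) volume a b :=
    intervalIntegrable_inner (hJc.comp hzc) (hdz a b)
  have hi2 : IntervalIntegrable (fun t => ⟪Jmap n (z a), dz t⟫_ℝ) volume a b :=
    intervalIntegrable_inner continuous_const (hdz a b)
  rw [h1, ← intervalIntegral.integral_sub hi1 hi2]
  set L := ∫ t in a..b, suppFn n K (dz t) with hL
  have hintg := intervalIntegrable_supp hK h0 (hdz a b)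
  have h2 := intervalIntegral.norm_integral_le_of_norm_le (μ := volume)
    (f := fun t => ⟪Jmap n (z t), dz t⟫_ℝ - ⟪Jmap n (z a), dz t⟫_ℝ)
    (g := fun t => (C * L) * (C * suppFn n K (dz t))) hab ?_ ((hintg.const_mul C).const_mul (C * L))
  · rw [Real.norm_eq_abs, intervalIntegral.integral_const_mul,
      intervalIntegral.integral_const_mul] at h2
    refine h2.trans (le_of_eq ?_)
    rw [← hL]; ring
  · filter_upwards with t ht
    rw [← inner_sub_left, ← Jmap_sub]
    refine (norm_inner_le_norm _ _).trans ?_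
    rw [Jmap_norm]
    refine mul_le_mul ?_ (hCb _) (norm_nonneg _) ?_
    · refine (hCb _).trans ?_
      gcongr
      rw [InE_sub hdz hz]
      refine (supp_integral_le hK h0 ht.1.le (hdz _ _)).trans ?_
      refine intervalIntegral.integral_mono_interval le_rfl ht.1.le ht.2 ?_ hintg
      filter_upwards with s using supp_nonneg hK h0 _
    · have : 0 ≤ L := intervalIntegral.integral_nonneg hab fun s _ => supp_nonneg hK h0 _
      positivity

lemma beta_partial {m : ℕ} (u : Fin (m + 1) → E n) :
    beta u u = 2 * ∑ i, ⟪Jmap n (∑ j, if j < i then u j else 0), u i⟫_ℝ := by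
  have h1 : ∀ i, ⟪Jmap n (∑ j, if j < i then u j else 0), u i⟫_ℝ =
      ∑ j, if j < i then ⟪Jmap n (u j), u i⟫_ℝ else 0 := by
    intro i
    rw [Jmap_sum, sum_inner]
    refine Finset.sum_congr rfl fun j _ => ?_
    split_ifs
    · rfl
    · rw [Jmap_zero, inner_zero_left]
  simp_rw [h1]
  have h2 : ∑ i, ∑ j, (if j < i then ⟪Jmap n (u j), u i⟫_ℝ else 0) =
      - ∑ i, ∑ j, (if i < j then ⟪Jmap n (u j), u i⟫_ℝ else 0) := by
    rw [Finset.sum_comm, ← Finset.sum_neg_distrib]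
    refine Finset.sum_congr rfl fun i _ => ?_
    rw [← Finset.sum_neg_distrib]
    refine Finset.sum_congr rfl fun j _ => ?_
    split_ifs
    · rw [Jmap_inner, real_inner_comm]
    · simp
  have h3 : beta u u = ∑ i, ∑ j, (if j < i then ⟪Jmap n (u j), u i⟫_ℝ else 0) -
      ∑ i, ∑ j, (if i < j then ⟪Jmap n (u j), u i⟫_ℝ else 0) := by
    rw [beta_eq, ← Finset.sum_sub_distrib]
    refine Finset.sum_congr rfl fun i _ => ?_
    rw [← Finset.sum_sub_distrib]
    refine Finset.sum_congr rfl fun j _ => ?_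
    unfold sg
    rcases lt_trichotomy i j with h | h | h
    · simp [h, h.not_gt]
    · simp [h]
    · simp [h, h.not_gt]
  linarith

lemma InE_length_pos (hK : IsCompact K) (h0 : (0 : E n) ∈ interior K)
    {z dz : ℝ → E n} (hz : InE n 2 z dz) :
    0 < ∫ t in (0:ℝ)..(2 * π), suppFn n K (dz t) := by
  have h0' := interior_subset h0
  obtain ⟨C, hC, hCb⟩ := exists_le_supp hK h0
  obtain ⟨hper, hdz, hz0, -, -, hA⟩ := hz
  have hpi : (0 : ℝ) ≤ 2 * π := by positivity
  have h1 := chord_estimate hK h0' hC hCb hdz hz0 hpi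
  have h2 : z (2 * π) = z 0 := by simpa using hper 0
  have h3 : ∫ t in (0:ℝ)..(2 * π), ⟪Jmap n (z t), dz t⟫_ℝ = 2 := by linarith
  rw [h2, h3, sub_self, inner_zero_right, sub_zero] at h1
  have h4 : 0 ≤ ∫ t in (0:ℝ)..(2 * π), suppFn n K (dz t) :=
    intervalIntegral.integral_nonneg hpi fun s _ => supp_nonneg hK h0' _
  rcases h4.eq_or_lt with h | h
  · rw [← h] at h1; norm_num at h1
  · exact h

lemma inscribed (hK : IsCompact K) (h0 : (0 : E n) ∈ interior K) {C : ℝ} (hC : 0 < C)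
    (hCb : ∀ u, ‖u‖ ≤ C * suppFn n K u) {z dz : ℝ → E n} (hzE : InE n 2 z dz) (m : ℕ) :
    ∃ u : Fin (m + 1) → E n, ∑ i, u i = 0 ∧
      (m + 1) * Phi K u ≤ (∫ t in (0:ℝ)..(2 * π), suppFn n K (dz t)) ^ 2 ∧
      4 - 2 * C ^ 2 * (∫ t in (0:ℝ)..(2 * π), suppFn n K (dz t)) ^ 2 / (m + 1) ≤ beta u u := by
  have h0' := interior_subset h0
  have hℓ := InE_length_pos hK h0 hzE
  obtain ⟨hper, hdz, hz, -, -, hA⟩ := hzE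
  have hpi : (0 : ℝ) ≤ 2 * π := by positivity
  set ℓ := ∫ t in (0:ℝ)..(2 * π), suppFn n K (dz t) with hℓdef
  have hintg : ∀ a b : ℝ, IntervalIntegrable (fun t => suppFn n K (dz t)) volume a b :=
    fun a b => intervalIntegrable_supp hK h0' (hdz a b)
  set Lf : ℝ → ℝ := fun t => ∫ s in (0:ℝ)..t, suppFn n K (dz s) with hLf
  have hLc : Continuous Lf := intervalIntegral.continuous_primitive hintg 0
  have hLsub : ∀ a b, Lf b - Lf a = ∫ s in a..b, suppFn n K (dz s) := fun a b =>
    intervalIntegral.integral_interval_sub_left (hintg _ _) (hintg _ _)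
  have hLm : Monotone Lf := by
    intro a b hab
    have h1 := hLsub a b
    have h2 : 0 ≤ ∫ s in a..b, suppFn n K (dz s) :=
      intervalIntegral.integral_nonneg hab fun s _ => supp_nonneg hK h0' _
    linarith
  have hL0 : Lf 0 = 0 := by simp [hLf]
  have hL1 : Lf (2 * π) = ℓ := rfl
  have hN : (0 : ℝ) < m + 1 := by positivity
  have hτ : ∀ k : ℕ, ∃ t : ℝ, (k ≤ m + 1 → Lf t = k * ℓ / (m + 1)) ∧ (k = 0 → t = 0) ∧
      (k = m + 1 → t = 2 * π) := by
    intro k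
    by_cases hk0 : k = 0
    · refine ⟨0, fun _ => by rw [hL0, hk0]; simp, fun _ => rfl, fun h => by omega⟩
    by_cases hk1 : k = m + 1
    · refine ⟨2 * π, fun _ => ?_, fun h => by omega, fun _ => rfl⟩
      rw [hL1, hk1]; push_cast; field_simp
    by_cases hk : k ≤ m + 1
    · have hk' : (k : ℝ) ≤ m + 1 := by exact_mod_cast hk
      have hmem : (k : ℝ) * ℓ / (m + 1) ∈ Icc (Lf 0) (Lf (2 * π)) := by
        rw [hL0, hL1]
        refine ⟨by positivity, ?_⟩
        rw [div_le_iff₀ hN]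
        nlinarith
      obtain ⟨t, _, ht⟩ := intermediate_value_Icc hpi hLc.continuousOn hmem
      exact ⟨t, fun _ => ht, fun h => absurd h hk0, fun h => absurd h hk1⟩
    · exact ⟨0, fun h => absurd h hk, fun _ => rfl, fun h => absurd h hk1⟩
  choose τ hτ1 hτ2 hτ3 using hτ
  have hτ0 : τ 0 = 0 := hτ2 0 rfl
  have hτN : τ (m + 1) = 2 * π := hτ3 _ rfl
  have hstep : ∀ k, k < m + 1 → ∫ s in τ k..τ (k + 1), suppFn n K (dz s) = ℓ / (m + 1) := by
    intro k hk
    rw [← hLsub, hτ1 k hk.le, hτ1 (k + 1) hk]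
    push_cast; field_simp; ring
  have hmono : ∀ k, k < m + 1 → τ k ≤ τ (k + 1) := by
    intro k hk
    by_contra hcon
    have h1 := hLm (not_le.1 hcon).le
    have h2 := hLsub (τ k) (τ (k + 1))
    rw [hstep k hk] at h2
    have : 0 < ℓ / (m + 1) := by positivity
    linarith
  let U : ℕ → E n := fun k => z (τ (k + 1)) - z (τ k)
  have hUsum : ∀ k, ∑ j ∈ Finset.range k, U j = z (τ k) - z 0 := by
    intro k
    rw [← hτ0]
    exact Finset.sum_range_sub (fun k => z (τ k)) k
  have hz2 : z (2 * π) = z 0 := by simpa using hper 0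
  have hUtot : ∑ j ∈ Finset.range (m + 1), U j = 0 := by
    rw [hUsum, hτN, hz2, sub_self]
  refine ⟨fun i => U i, ?_, ?_, ?_⟩
  · rw [← hUtot, Finset.sum_range]
  · have h1 : ∀ i : Fin (m + 1), suppFn n K (U i) ^ 2 ≤ (ℓ / (m + 1)) ^ 2 := by
      intro i
      apply pow_le_pow_left₀ (supp_nonneg hK h0' _)
      rw [← hstep i i.isLt]
      simp only [U]
      rw [InE_sub hdz hz]
      exact supp_integral_le hK h0' (hmono i i.isLt) (hdz _ _)
    have h2 : Phi K (fun i : Fin (m + 1) => U i) ≤ (m + 1) * (ℓ / (m + 1)) ^ 2 := by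
      unfold Phi
      refine (Finset.sum_le_sum fun i _ => h1 i).trans ?_
      simp
    calc (m + 1) * Phi K (fun i : Fin (m + 1) => U i)
        ≤ (m + 1) * ((m + 1) * (ℓ / (m + 1)) ^ 2) := by gcongr
      _ = ℓ ^ 2 := by field_simp
  · have hb : beta (fun i : Fin (m + 1) => U i) (fun i : Fin (m + 1) => U i) =
        2 * ∑ k ∈ Finset.range (m + 1), ⟪Jmap n (z (τ k)), U k⟫_ℝ := by
      rw [beta_partial]
      congr 1
      have h1 : ∀ i : Fin (m + 1), (∑ j : Fin (m + 1), if j < i then U j else 0)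
          = z (τ i) - z 0 := by
        intro i
        rw [← hUsum]
        simp only [Fin.lt_def]
        rw [← Finset.sum_range (fun j => if j < i.val then U j else 0), ← Finset.sum_filter]
        congr 1
        ext j
        simp only [Finset.mem_filter, Finset.mem_range]
        have := i.isLt
        omega
      simp_rw [h1, Jmap_sub, inner_sub_left, Finset.sum_sub_distrib, ← inner_sum]
      rw [← Finset.sum_range (fun j => U j), hUtot, inner_zero_right, sub_zero,
        ← Finset.sum_range (fun j => ⟪Jmap n (z (τ j)), U j⟫_ℝ)]
    have hA2 : ∫ t in (0:ℝ)..(2 * π), ⟪Jmap n (z t), dz t⟫_ℝ = 2 := by linarith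
    have hzc := InE_continuous hdz hz
    have hsplit : ∑ k ∈ Finset.range (m + 1), ∫ t in τ k..τ (k + 1), ⟪Jmap n (z t), dz t⟫_ℝ = 2 := by
      rw [intervalIntegral.sum_integral_adjacent_intervals, hτ0, hτN, hA2]
      intro k _
      exact intervalIntegrable_inner ((Jmap_continuous n).comp hzc) (hdz _ _)
    have hest : 2 - ∑ k ∈ Finset.range (m + 1), ⟪Jmap n (z (τ k)), U k⟫_ℝ
        ≤ (m + 1) * (C ^ 2 * (ℓ / (m + 1)) ^ 2) := by
      rw [← hsplit, ← Finset.sum_sub_distrib]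
      have : ∀ k ∈ Finset.range (m + 1), (∫ t in τ k..τ (k + 1), ⟪Jmap n (z t), dz t⟫_ℝ) -
          ⟪Jmap n (z (τ k)), U k⟫_ℝ ≤ C ^ 2 * (ℓ / (m + 1)) ^ 2 := by
        intro k hk
        have hk' := Finset.mem_range.1 hk
        have := chord_estimate hK h0' hC hCb hdz hz (hmono k hk')
        rw [hstep k hk'] at this
        exact (le_abs_self _).trans this
      refine (Finset.sum_le_sum this).trans ?_
      simp
    have he : 2 * C ^ 2 * ℓ ^ 2 / (m + 1) = 2 * ((m + 1) * (C ^ 2 * (ℓ / (m + 1)) ^ 2)) := by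
      field_simp
    rw [hb, he]
    linarith

end inscribed

/-! ## Passing to the limit -/

section limit
variable {n : ℕ}

lemma scheme_estimate {W : E n → E n} {P : ℤ → E n} {μ N : ℝ} (hμ : 0 ≤ μ) (hN : 0 < N)
    (hstep : ∀ k, P (k + 1) - P k = (μ / (2 * N)) • (W (P k) + W (P (k + 1))))
    (w : E n) (ε : ℝ) (k : ℤ) (j : ℕ)
    (h : ∀ i : ℕ, i ≤ j → ‖W (P (k + i)) - w‖ ≤ ε) :
    ‖P (k + j) - P k - ((j / N) * μ) • w‖ ≤ (j / N) * μ * ε := by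
  induction j with
  | zero => simp
  | succ j ih =>
    have ih' := ih fun i hi => h i (by omega)
    have e1 : P (k + (j + 1 : ℕ)) - P k - (((j + 1 : ℕ) / N) * μ) • w =
        (P (k + j) - P k - ((j / N) * μ) • w) +
        (μ / (2 * N)) • ((W (P (k + j)) - w) + (W (P (k + (j + 1 : ℕ))) - w)) := by
      have e2 := hstep (k + j)
      have e4 : k + ((j + 1 : ℕ) : ℤ) = k + j + 1 := by push_cast; ring
      rw [e4]
      have e3 : P (k + j + 1) =
          P (k + j) + (μ / (2 * N)) • (W (P (k + j)) + W (P (k + j + 1))) := by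
        rw [← e2, add_sub_cancel]
      have e5 : (((j + 1 : ℕ) : ℝ) / N) * μ = (j / N) * μ + 2 * (μ / (2 * N)) := by
        push_cast; field_simp
      generalize W (P (k + j + 1)) = B at e3 ⊢
      rw [e3, e5]
      module
    rw [e1]
    refine (norm_add_le _ _).trans ?_
    have e6 : ‖(μ / (2 * N)) • ((W (P (k + j)) - w) + (W (P (k + (j + 1 : ℕ))) - w))‖
        ≤ (μ / (2 * N)) * (ε + ε) := by
      rw [norm_smul, Real.norm_of_nonneg (by positivity)]
      gcongr
      exact (norm_add_le _ _).trans (add_le_add (h j (by omega)) (h (j + 1) le_rfl))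
    have e7 : (((j + 1 : ℕ) : ℝ) / N) * μ * ε = (j / N) * μ * ε + (μ / (2 * N)) * (ε + ε) := by
      push_cast; field_simp; ring
    rw [e7]
    exact add_le_add ih' e6

lemma floor_mul_div_tendsto (s : ℝ) :
    Tendsto (fun N : ℕ => (⌊(N : ℝ) * s⌋ : ℝ) / N) atTop (𝓝 s) := by
  have h1 : Tendsto (fun N : ℕ => s - 1 / (N : ℝ)) atTop (𝓝 s) := by
    simpa using tendsto_const_nhds.sub (tendsto_one_div_atTop_nhds_zero_nat (𝕜 := ℝ))
  refine tendsto_of_tendsto_of_tendsto_of_le_of_le' h1 tendsto_const_nhds ?_ ?_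
  · filter_upwards [eventually_gt_atTop 0] with N hN
    have hN' : (0 : ℝ) < N := by exact_mod_cast hN
    rw [le_div_iff₀ hN', sub_mul, one_div, inv_mul_cancel₀ hN'.ne']
    have := Int.sub_one_lt_floor ((N : ℝ) * s)
    linarith
  · filter_upwards [eventually_gt_atTop 0] with N hN
    have hN' : (0 : ℝ) < N := by exact_mod_cast hN
    rw [div_le_iff₀ hN']
    have := Int.floor_le ((N : ℝ) * s)
    linarith

lemma ultra_limit {X : Type*} [TopologicalSpace X] (𝒰 : Ultrafilter ℕ) {s : Set X}
    (hs : IsCompact s) (f : ℕ → X) (hf : ∀ᶠ N in (𝒰 : Filter ℕ), f N ∈ s) :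
    ∃ x ∈ s, Tendsto f 𝒰 (𝓝 x) :=
  hs.ultrafilter_le_nhds' (𝒰.map f) hf

lemma limit_curve (𝒰 : Ultrafilter ℕ) (h𝒰 : (𝒰 : Filter ℕ) ≤ atTop)
    {W : E n → E n} (hW : Continuous W) (P : ℕ → ℤ → E n) (μ : ℕ → ℝ) (b R : ℝ)
    (hall : ∀ᶠ N in atTop, (0 ≤ μ N ∧ μ N ≤ b) ∧ (∀ k, ‖P N k‖ ≤ R) ∧
      (∀ k, P N (k + 1) - P N k = (μ N / (2 * N)) • (W (P N k) + W (P N (k + 1)))) ∧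
      ∀ k, P N (k + N) = P N k) :
    ∃ (p : ℝ → E n) (μ' : ℝ), Tendsto μ 𝒰 (𝓝 μ') ∧ (∀ t, HasDerivAt p (μ' • W (p t)) t) ∧
      Function.Periodic p 1 ∧ Tendsto (fun N => P N 0) 𝒰 (𝓝 (p 0)) := by
  have hall' := hall.filter_mono h𝒰
  obtain ⟨μ', hμ'mem, hμ'⟩ := ultra_limit 𝒰 (isCompact_Icc (a := (0 : ℝ)) (b := b)) μ
    (hall'.mono fun N hN => hN.1)
  have hlim : ∀ t : ℝ, ∃ x ∈ closedBall (0 : E n) R,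
      Tendsto (fun N : ℕ => P N ⌊(N : ℝ) * t⌋) 𝒰 (𝓝 x) := fun t =>
    ultra_limit 𝒰 (isCompact_closedBall 0 R) _
      (hall'.mono fun N hN => mem_closedBall_zero_iff.2 (hN.2.1 _))
  choose p hpR hp using hlim
  have hb : 0 ≤ b := hμ'mem.1.trans hμ'mem.2
  obtain ⟨B, hB⟩ := (isCompact_closedBall (0 : E n) R).exists_bound_of_continuousOn hW.continuousOn
  have hB0 : 0 ≤ B := (norm_nonneg _).trans (hB _ (hpR 0))
  -- the local estimate
  have key : ∀ t ε, 0 < ε → ∃ δ > 0, ∀ s₁ s₂, s₁ ≤ t → t ≤ s₂ → s₂ - s₁ < δ →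
      ‖p s₂ - p s₁ - (s₂ - s₁) • (μ' • W (p t))‖ ≤ ε * (s₂ - s₁) := by
    intro t ε hε
    obtain ⟨δ, hδ, hδW⟩ := Metric.continuousAt_iff.1 (hW.continuousAt (x := p t)) (ε / (b + 1))
      (by positivity)
    refine ⟨δ / 2 / (b * B + 1), by positivity, fun s₁ s₂ h1 h2 hlt => ?_⟩
    have hs12 : s₁ ≤ s₂ := h1.trans h2
    set jj : ℕ → ℕ := fun N => (⌊(N : ℝ) * s₂⌋ - ⌊(N : ℝ) * s₁⌋).toNat with hjj
    have hjcast : ∀ N, ((jj N : ℕ) : ℤ) = ⌊(N : ℝ) * s₂⌋ - ⌊(N : ℝ) * s₁⌋ := by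
      intro N
      apply Int.toNat_of_nonneg
      have : ⌊(N : ℝ) * s₁⌋ ≤ ⌊(N : ℝ) * s₂⌋ := Int.floor_mono (by gcongr)
      omega
    have hjlim : Tendsto (fun N : ℕ => (jj N : ℝ) / N) 𝒰 (𝓝 (s₂ - s₁)) := by
      have h3 := ((floor_mul_div_tendsto s₂).sub (floor_mul_div_tendsto s₁)).mono_left h𝒰
      refine h3.congr fun N => ?_
      have : ((jj N : ℕ) : ℝ) = (⌊(N : ℝ) * s₂⌋ : ℝ) - (⌊(N : ℝ) * s₁⌋ : ℝ) := by
        exact_mod_cast hjcast N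
      rw [this, sub_div]
    have hsmall : ∀ᶠ N in (𝒰 : Filter ℕ), (jj N : ℝ) / N < δ / 2 / (b * B + 1) :=
      hjlim.eventually_lt_const hlt
    have hnear : ∀ᶠ N in (𝒰 : Filter ℕ), dist (P N ⌊(N : ℝ) * t⌋) (p t) < δ / 2 :=
      (Metric.tendsto_nhds.1 (hp t)) (δ / 2) (by positivity)
    have hest : ∀ᶠ N in (𝒰 : Filter ℕ),
        ‖P N ⌊(N : ℝ) * s₂⌋ - P N ⌊(N : ℝ) * s₁⌋ - (((jj N : ℝ) / N) * μ N) • W (p t)‖ ≤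
        ((jj N : ℝ) / N) * μ N * (ε / (b + 1)) := by
      filter_upwards [hsmall, hnear, hall', h𝒰 (eventually_gt_atTop 0)] with N hN1 hN2 hN3 hN4
      obtain ⟨⟨hμ0, hμb⟩, hRb, hst, -⟩ := hN3
      have hN' : (0 : ℝ) < N := by exact_mod_cast hN4
      have hlip : ∀ (k : ℤ) (j : ℕ), j ≤ jj N → ‖P N (k + j) - P N k‖ < δ / 2 := by
        intro k j hj
        have h3 := scheme_estimate hμ0 hN' hst 0 B k j
          (fun i _ => by rw [sub_zero]; exact hB _ (mem_closedBall_zero_iff.2 (hRb _)))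
        rw [smul_zero, sub_zero] at h3
        have hj' : (j : ℝ) ≤ jj N := by exact_mod_cast hj
        calc _ ≤ (j : ℝ) / N * μ N * B := h3
          _ ≤ (jj N : ℝ) / N * b * B := by gcongr
          _ = (jj N : ℝ) / N * (b * B) := by ring
          _ ≤ (jj N : ℝ) / N * (b * B + 1) := by gcongr; linarith
          _ < δ / 2 := by
            rwa [lt_div_iff₀ (by positivity)] at hN1
      have hfl1 : ⌊(N : ℝ) * s₁⌋ ≤ ⌊(N : ℝ) * t⌋ := Int.floor_mono (by gcongr)
      have hfl2 : ⌊(N : ℝ) * t⌋ ≤ ⌊(N : ℝ) * s₂⌋ := Int.floor_mono (by gcongr)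
      have hjc := hjcast N
      have h4 := scheme_estimate hμ0 hN' hst (W (p t)) (ε / (b + 1)) ⌊(N : ℝ) * s₁⌋ (jj N) ?_
      · have h5 : ⌊(N : ℝ) * s₁⌋ + (jj N : ℤ) = ⌊(N : ℝ) * s₂⌋ := by omega
        rwa [h5] at h4
      · intro i hi
        rw [← dist_eq_norm]
        apply le_of_lt
        apply hδW
        have hd : dist (P N (⌊(N : ℝ) * s₁⌋ + i)) (P N ⌊(N : ℝ) * t⌋) < δ / 2 := by
          rcases le_total (⌊(N : ℝ) * s₁⌋ + (i : ℤ)) ⌊(N : ℝ) * t⌋ with hle | hle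
          · obtain ⟨q, hq⟩ := Int.le.dest hle
            rw [dist_comm, dist_eq_norm, ← hq]
            apply hlip
            omega
          · obtain ⟨q, hq⟩ := Int.le.dest hle
            rw [dist_eq_norm, ← hq]
            apply hlip
            omega
        linarith [dist_triangle (P N (⌊(N : ℝ) * s₁⌋ + i)) (P N ⌊(N : ℝ) * t⌋) (p t)]
    have hL := (((hp s₂).sub (hp s₁)).sub ((hjlim.mul hμ').smul_const (W (p t)))).norm
    have hRt := (hjlim.mul hμ').mul_const (ε / (b + 1))
    have hfin := le_of_tendsto_of_tendsto hL hRt hest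
    rw [mul_smul] at hfin
    refine hfin.trans ?_
    have h6 : μ' * (ε / (b + 1)) ≤ ε := by
      rw [mul_div_assoc', div_le_iff₀ (by positivity)]
      nlinarith [hμ'mem.2]
    have h7 : 0 ≤ s₂ - s₁ := by linarith
    calc (s₂ - s₁) * μ' * (ε / (b + 1)) = (s₂ - s₁) * (μ' * (ε / (b + 1))) := by ring
      _ ≤ (s₂ - s₁) * ε := by gcongr
      _ = _ := by ring
  refine ⟨p, μ', hμ', ?_, ?_, ?_⟩
  · intro t
    rw [hasDerivAt_iff_isLittleO, Asymptotics.isLittleO_iff]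
    intro ε hε
    obtain ⟨δ, hδ, h⟩ := key t ε hε
    filter_upwards [Metric.ball_mem_nhds t hδ] with s hs
    rw [mem_ball, Real.dist_eq] at hs
    rcases le_total t s with hts | hts
    · have h1 := h t s le_rfl hts ((le_abs_self _).trans_lt hs)
      rwa [Real.norm_of_nonneg (by linarith : 0 ≤ s - t)]
    · have h1 := h s t hts le_rfl (by rw [abs_sub_comm] at hs; exact (le_abs_self _).trans_lt hs)
      rw [Real.norm_of_nonpos (by linarith : s - t ≤ 0), neg_sub]
      refine le_trans (le_of_eq ?_) h1
      rw [← norm_neg]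
      congr 1
      module
  · intro t
    refine tendsto_nhds_unique (hp (t + 1)) ((hp t).congr' ?_)
    filter_upwards [hall'] with N hN
    have : ⌊(N : ℝ) * (t + 1)⌋ = ⌊(N : ℝ) * t⌋ + N := by
      rw [mul_add, mul_one, Int.floor_add_natCast]
    rw [this, hN.2.2.2]
  · have := hp 0
    simpa using this

end limit

/-! ## Existence of a closed characteristic -/

section existence
variable {n : ℕ} {K : Set (E n)}

lemma discrete_scaled {m : ℕ} (hK : IsCompact K) (hc : Convex ℝ K) (h0 : (0 : E n) ∈ interior K)
    (hs : HasSmoothBoundary n K) {C : ℝ} (hC : 0 < C) (hCb : ∀ u : E n, ‖u‖ ≤ C * suppFn n K u)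
    (u0 : Fin (m + 1) → E n) (hs0 : ∑ i, u0 i = 0) (hb0 : 0 < beta u0 u0) :
    ∃ μ : ℝ, 0 < μ ∧ 4 ≤ C ^ 2 * μ ∧
      (∀ w : Fin (m + 1) → E n, ∑ i, w i = 0 → μ * beta w w ≤ 4 * (((m : ℝ) + 1) * Phi K w)) ∧
      ∃ P : ℤ → E n, 1 ≤ gauge K (P 0) ∧ (∃ j, gauge K (P j) ≤ 1) ∧
        (∀ i j, ‖P j - P i‖ ≤ C * μ) ∧
        (∀ k, P (k + 1) - P k = (μ / (2 * ((m + 1 : ℕ) : ℝ))) •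
          ((1 / 4 : ℝ) • Jmap n (gradF n K (P k)) + (1 / 4 : ℝ) • Jmap n (gradF n K (P (k + 1))))) ∧
        ∀ k, P (k + (m + 1 : ℕ)) = P k := by
  obtain ⟨M, hM, h4, hw, p0, hsum, hstep0, hdist⟩ := discrete_main hK hc h0 hs hC hCb u0 hs0 hb0
  have hN : (0 : ℝ) < (m : ℝ) + 1 := by positivity
  have hconst : ∑ _i : Fin (m + 1), (1 / ((m : ℝ) + 1)) = 1 := by
    simp [hN.ne']
  obtain ⟨i0, -, hi0⟩ := Finset.exists_le_of_sum_le (s := Finset.univ)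
    (f := fun _ : Fin (m + 1) => 1 / ((m : ℝ) + 1)) (g := fun i => gauge K (p0 i) ^ 2)
    Finset.univ_nonempty (by rw [hconst, hsum])
  obtain ⟨j0, -, hj0⟩ := Finset.exists_le_of_sum_le (s := Finset.univ)
    (g := fun _ : Fin (m + 1) => 1 / ((m : ℝ) + 1)) (f := fun i => gauge K (p0 i) ^ 2)
    Finset.univ_nonempty (by rw [hconst, hsum])
  let p : ZMod (m + 1) → E n := p0
  have hstep : ∀ i : ZMod (m + 1), p (i + 1) - p i =
    (M / 8) • Jmap n (gradF n K (p i) + gradF n K (p (i + 1))) := hstep0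
  set r : ℝ := √((m : ℝ) + 1) with hr
  have hr0 : 0 < r := Real.sqrt_pos.2 hN
  have hr2 : r ^ 2 = (m : ℝ) + 1 := Real.sq_sqrt hN.le
  let I0 : ZMod (m + 1) := i0
  let J0 : ZMod (m + 1) := j0
  refine ⟨((m : ℝ) + 1) * M, by positivity, by linarith, ?_,
    fun k => r • p ((k : ZMod (m + 1)) + I0), ?_, ?_, ?_, ?_, ?_⟩
  · intro w hw0
    have := mul_le_mul_of_nonneg_left (hw w hw0) hN.le
    linarith
  · rw [gauge_smul_of_nonneg hr0.le]
    have e : p (((0 : ℤ) : ZMod (m + 1)) + I0) = p0 i0 := by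
      rw [Int.cast_zero, zero_add]
    rw [e]
    have h1 : 0 ≤ gauge K (p0 i0) := gauge_nonneg _
    have h2 : 1 ≤ (r * gauge K (p0 i0)) ^ 2 := by
      rw [mul_pow, hr2]
      rw [div_le_iff₀ hN] at hi0
      linarith
    rw [smul_eq_mul]
    nlinarith [mul_nonneg hr0.le h1]
  · obtain ⟨k, hk⟩ := ZMod.intCast_surjective (J0 - I0)
    refine ⟨k, ?_⟩
    have e : p ((k : ZMod (m + 1)) + I0) = p0 j0 := by
      rw [hk, sub_add_cancel]
    simp only [e]
    rw [gauge_smul_of_nonneg hr0.le]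
    have h1 : 0 ≤ gauge K (p0 j0) := gauge_nonneg _
    have h2 : (r * gauge K (p0 j0)) ^ 2 ≤ 1 := by
      rw [mul_pow, hr2]
      rw [le_div_iff₀ hN] at hj0
      linarith
    rw [smul_eq_mul]
    nlinarith [mul_nonneg hr0.le h1]
  · intro i j
    rw [← smul_sub, norm_smul, Real.norm_of_nonneg hr0.le]
    have := hdist ((i : ZMod (m + 1)) + I0) ((j : ZMod (m + 1)) + I0)
    calc _ ≤ r * (C * M * r) := by gcongr
      _ = C * (r ^ 2 * M) := by ring
      _ = _ := by rw [hr2]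
  · intro k
    have e : (((k + 1 : ℤ) : ZMod (m + 1)) + I0) = ((k : ZMod (m + 1)) + I0) + 1 := by
      push_cast; ring
    simp only [e]
    rw [gradF_smul h0 hs hr0, gradF_smul h0 hs hr0, ← smul_sub, hstep, Jmap_add, Jmap_smul,
      Jmap_smul]
    have e2 : ((m : ℝ) + 1) * M / (2 * ((m + 1 : ℕ) : ℝ)) = M / 2 := by
      push_cast; field_simp
    rw [e2]
    module
  · intro k
    have e : ((k + (m + 1 : ℕ) : ℤ) : ZMod (m + 1)) = (k : ZMod (m + 1)) := by
      rw [Int.cast_add, Int.cast_natCast, ZMod.natCast_self, add_zero]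
    simp only [e]

lemma exists_closed_char (hK : IsCompact K) (hc : Convex ℝ K) (h0 : (0 : E n) ∈ interior K)
    (hs : HasSmoothBoundary n K) {z0 dz0 : ℝ → E n} (hz0 : InE n 2 z0 dz0) :
    ∃ γ : ℝ → E n, IsClosedCharacteristic n K γ 1 ∧ ∀ z dz, InE n 2 z dz →
      action n γ 1 ≤ (∫ t in (0:ℝ)..(2 * π), suppFn n K (dz t)) ^ 2 / 4 := by
  obtain ⟨C, hC, hCb⟩ := exists_le_supp hK h0
  obtain ⟨R, hR⟩ := hK.isBounded.exists_norm_le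
  set ℓ0 := ∫ t in (0:ℝ)..(2 * π), suppFn n K (dz0 t) with hℓ0
  have hfrac : ∀ ℓ : ℝ, Tendsto (fun N : ℕ => 4 - 2 * C ^ 2 * ℓ ^ 2 / (N : ℝ)) atTop (𝓝 4) := by
    intro ℓ
    simpa using (tendsto_const_nhds (x := (4 : ℝ))).sub (tendsto_const_div_atTop_nhds_zero_nat (2 * C ^ 2 * ℓ ^ 2))
  have hex : ∀ N : ℕ, ∃ (μ : ℝ) (P : ℤ → E n), 2 < 4 - 2 * C ^ 2 * ℓ0 ^ 2 / (N : ℝ) → 0 < N →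
      0 < μ ∧ 4 ≤ C ^ 2 * μ ∧
      (∀ z dz, InE n 2 z dz → μ * (4 - 2 * C ^ 2 *
        (∫ t in (0:ℝ)..(2 * π), suppFn n K (dz t)) ^ 2 / (N : ℝ)) ≤
          4 * (∫ t in (0:ℝ)..(2 * π), suppFn n K (dz t)) ^ 2) ∧
      1 ≤ gauge K (P 0) ∧ (∃ j, gauge K (P j) ≤ 1) ∧
        (∀ i j, ‖P j - P i‖ ≤ C * μ) ∧
        (∀ k, P (k + 1) - P k = (μ / (2 * (N : ℝ))) •
          ((1 / 4 : ℝ) • Jmap n (gradF n K (P k)) + (1 / 4 : ℝ) • Jmap n (gradF n K (P (k + 1))))) ∧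
        ∀ k, P (k + N) = P k := by
    intro N
    by_cases h : 2 < 4 - 2 * C ^ 2 * ℓ0 ^ 2 / (N : ℝ) ∧ 0 < N
    · obtain ⟨h1, h2⟩ := h
      obtain ⟨m, rfl⟩ : ∃ m, N = m + 1 := ⟨N - 1, by omega⟩
      obtain ⟨u, hu0, hu1, hu2⟩ := inscribed hK h0 hC hCb hz0 m
      push_cast at h1
      have hb : 0 < beta u u := by rw [← hℓ0] at hu2; linarith
      obtain ⟨μ, hμ, hμ4, hw, P, hP1, hP2, hP3, hP4, hP5⟩ :=
        discrete_scaled hK hc h0 hs hC hCb u hu0 hb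
      refine ⟨μ, P, fun _ _ => ⟨hμ, hμ4, ?_, hP1, hP2, hP3, hP4, hP5⟩⟩
      intro z dz hz
      obtain ⟨v, hv0, hv1, hv2⟩ := inscribed hK h0 hC hCb hz m
      have h3 := hw v hv0
      have h4 := mul_le_mul_of_nonneg_left hv2 hμ.le
      push_cast
      linarith
    · exact ⟨0, 0, fun a b => absurd ⟨a, b⟩ h⟩
  choose μ P hμP using hex
  have hev : ∀ᶠ N : ℕ in atTop, 2 < 4 - 2 * C ^ 2 * ℓ0 ^ 2 / (N : ℝ) ∧ 0 < N :=
    ((hfrac ℓ0).eventually_const_lt (by norm_num)).and (eventually_gt_atTop 0)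
  have hbound : ∀ᶠ N : ℕ in atTop, μ N ≤ 2 * ℓ0 ^ 2 := by
    filter_upwards [hev] with N hN
    obtain ⟨hμ, -, hz, -⟩ := hμP N hN.1 hN.2
    have h1 := hz z0 dz0 hz0
    rw [← hℓ0] at h1
    nlinarith [hN.1]
  let W : E n → E n := fun x => (1 / 4 : ℝ) • Jmap n (gradF n K x)
  have hW : Continuous W :=
    ((Jmap_continuous n).comp (gradF_continuous hK hc h0 hs)).const_smul (1 / 4 : ℝ)
  have h𝒰 : ((hyperfilter ℕ : Ultrafilter ℕ) : Filter ℕ) ≤ atTop := Nat.hyperfilter_le_atTop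
  obtain ⟨p, μ', hμ', hp, hper, hp0⟩ := limit_curve (hyperfilter ℕ) h𝒰 hW P μ (2 * ℓ0 ^ 2)
    (R + C * (2 * ℓ0 ^ 2)) (by
      filter_upwards [hev, hbound] with N hN hb
      obtain ⟨hμ, -, -, -, ⟨j, hj⟩, hd, hst, hpe⟩ := hμP N hN.1 hN.2
      refine ⟨⟨hμ.le, hb⟩, fun k => ?_, hst, hpe⟩
      have h1 : P N j ∈ K := by
        have := (gauge_le_one_iff_mem_closure hc (body_nhds h0)).1 hj
        rwa [hK.isClosed.closure_eq] at this
      have h2 := hR _ h1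
      have h3 := hd j k
      have h4 : C * μ N ≤ C * (2 * ℓ0 ^ 2) := by gcongr
      have h5 := norm_add_le (P N j) (P N k - P N j)
      rw [add_sub_cancel] at h5
      linarith)
  have hev' := hev.filter_mono h𝒰
  have hμ'4 : 4 ≤ C ^ 2 * μ' :=
    ge_of_tendsto (hμ'.const_mul (C ^ 2)) (hev'.mono fun N hN => (hμP N hN.1 hN.2).2.1)
  have hμ'pos : 0 < μ' := by
    by_contra hcon
    have : C ^ 2 * μ' ≤ 0 := mul_nonpos_of_nonneg_of_nonpos (by positivity) (by linarith)
    linarith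
  have hgc : Continuous (gauge K) := continuous_gauge hc (body_nhds h0)
  have hg0 : 1 ≤ gauge K (p 0) :=
    ge_of_tendsto ((hgc.tendsto _).comp hp0) (hev'.mono fun N hN => (hμP N hN.1 hN.2).2.2.2.1)
  have hμ'len : ∀ z dz, InE n 2 z dz →
      μ' ≤ (∫ t in (0:ℝ)..(2 * π), suppFn n K (dz t)) ^ 2 := by
    intro z dz hz
    have h1 := hμ'.mul ((hfrac (∫ t in (0:ℝ)..(2 * π), suppFn n K (dz t))).mono_left h𝒰)
    have h2 := le_of_tendsto h1 (hev'.mono fun N hN => (hμP N hN.1 hN.2).2.2.1 z dz hz)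
    linarith
  -- energy conservation
  have hen : ∀ t, gauge K (p t) ^ 2 = gauge K (p 0) ^ 2 := by
    have hd : ∀ t, HasDerivAt (fun t => gauge K (p t) ^ 2) 0 t := by
      intro t
      have h1 := (gaugeSq_hasFDerivAt h0 hs (p t)).comp_hasDerivAt t (hp t)
      have h2 : (innerSL ℝ (gradF n K (p t))) (μ' • W (p t)) = 0 := by
        simp only [W, innerSL_apply_apply, inner_smul_right]
        rw [real_inner_comm, Jmap_inner_self]
        ring
      rw [h2] at h1
      exact h1
    intro t
    exact is_const_of_deriv_eq_zero (fun t => (hd t).differentiableAt) (fun t => (hd t).deriv) t 0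
  set κ := gauge K (p 0) with hκ
  have hκ0 : 0 < κ := by linarith
  have hgk : ∀ t, gauge K (p t) = κ := fun t =>
    (pow_left_inj₀ (gauge_nonneg _) hκ0.le two_ne_zero).1 (hen t)
  let γ : ℝ → E n := fun t => κ⁻¹ • p t
  have hγg : ∀ t, gauge K (γ t) = 1 := by
    intro t
    simp only [γ]
    rw [gauge_smul_of_nonneg (by positivity), hgk, smul_eq_mul, inv_mul_cancel₀ hκ0.ne']
  have hγd : ∀ t, HasDerivAt γ ((μ' / 4) • Jmap n (gradF n K (γ t))) t := by
    intro t
    have h1 := (hp t).const_smul κ⁻¹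
    have h2 : (μ' / 4) • Jmap n (gradF n K (γ t)) = κ⁻¹ • μ' • W (p t) := by
      simp only [γ, W]
      rw [gradF_smul h0 hs (by positivity), Jmap_smul]
      module
    rw [h2]; exact h1
  have hγder : ∀ t, deriv γ t = (μ' / 4) • Jmap n (gradF n K (γ t)) := fun t => (hγd t).deriv
  have hγdiff : Differentiable ℝ γ := fun t => (hγd t).differentiableAt
  have hγ1 : ContDiff ℝ 1 γ := by
    rw [contDiff_one_iff_deriv]
    refine ⟨hγdiff, ?_⟩
    have : deriv γ = fun t => (μ' / 4) • Jmap n (gradF n K (γ t)) := funext hγder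
    rw [this]
    exact (((Jmap_continuous n).comp (gradF_continuous hK hc h0 hs)).comp
      hγdiff.continuous).const_smul (μ' / 4)
  refine ⟨γ, ⟨one_pos, ?_, hγ1, ?_, ?_, μ' / 4, by positivity, hγder⟩, ?_⟩
  · intro t
    simp only [γ, hper t]
  · by_contra hcon
    push Not at hcon
    have h1 : γ = fun _ => γ 0 := funext fun t => hcon t 0
    have h2 : deriv γ 0 = 0 := by rw [h1]; simp
    rw [hγder, smul_eq_zero] at h2
    have h3 : Jmap n (gradF n K (γ 0)) = 0 := h2.resolve_left (by positivity)
    have h4 : gradF n K (γ 0) = 0 := by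
      have := Jmap_Jmap n (gradF n K (γ 0))
      rw [h3, Jmap_zero] at this
      exact (neg_eq_zero.1 this.symm)
    have h5 := inner_gradF_self h0 hs (γ 0)
    rw [h4, hγg, inner_zero_left] at h5
    norm_num at h5
  · intro t
    exact (gauge_eq_one_iff_mem_frontier hc (body_nhds h0)).1 (hγg t)
  · intro z dz hz
    have h1 : ∀ t, ⟪-Jmap n (deriv γ t), γ t⟫_ℝ = μ' / 2 := by
      intro t
      rw [hγder, Jmap_smul, Jmap_Jmap, smul_neg, neg_neg, real_inner_smul_left,
        inner_gradF_self h0 hs, hγg]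
      ring
    unfold action
    simp only [h1]
    rw [intervalIntegral.integral_const]
    have := hμ'len z dz hz
    simp only [smul_eq_mul]
    linarith

end existence
/-! ## The test loop attached to a closed characteristic -/

section testloop
variable {n : ℕ} {K T : Set (E n)}

lemma gauge_polar (hT : IsCompact T) (h0 : (0 : E n) ∈ interior T) (x : E n) :
    gauge (Jmap n '' polarBody n T) x = suppFn n T (-Jmap n x) := by
  have h0T : (0 : E n) ∈ T := interior_subset h0
  have hmem : ∀ r : ℝ, 0 < r →
      (x ∈ r • (Jmap n '' polarBody n T) ↔ suppFn n T (-Jmap n x) ≤ r) := by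
    intro r hr
    rw [Set.mem_smul_set_iff_inv_smul_mem₀ hr.ne']
    have e : ∀ y, ⟪r⁻¹ • (-Jmap n x), y⟫_ℝ = r⁻¹ * ⟪y, -Jmap n x⟫_ℝ := fun y => by
      rw [real_inner_smul_left, real_inner_comm]
    constructor
    · rintro ⟨y, hy, hyx⟩
      have hy' : y = r⁻¹ • (-Jmap n x) := by
        have := congrArg (Jmap n) hyx
        rw [Jmap_Jmap, Jmap_smul] at this
        rw [smul_neg, ← this, neg_neg]
      refine supp_le ⟨0, h0T⟩ fun w hw => ?_
      have h1 := hy w hw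
      rw [hy', e, inv_mul_le_iff₀ hr, mul_one] at h1
      exact h1
    · intro h
      refine ⟨r⁻¹ • (-Jmap n x), fun w hw => ?_, ?_⟩
      · rw [e, inv_mul_le_iff₀ hr, mul_one]
        exact (le_supp hT hw _).trans h
      · rw [Jmap_smul, Jmap_neg, Jmap_Jmap, neg_neg]
  rw [gauge_def]
  set s := suppFn n T (-Jmap n x) with hs
  have hs0 : 0 ≤ s := supp_nonneg hT h0T _
  have hset : {r ∈ Set.Ioi (0 : ℝ) | x ∈ r • (Jmap n '' polarBody n T)} =
      {r | 0 < r ∧ s ≤ r} := by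
    ext r
    constructor
    · rintro ⟨h1, h2⟩; exact ⟨h1, (hmem r h1).1 h2⟩
    · rintro ⟨h1, h2⟩; exact ⟨h1, (hmem r h1).2 h2⟩
  rw [hset]
  apply le_antisymm
  · apply le_of_forall_pos_le_add
    intro ε hε
    exact csInf_le ⟨0, fun r hr => hr.1.le⟩ ⟨by positivity, by linarith⟩
  · exact le_csInf ⟨s + 1, by positivity, by linarith⟩ fun r hr => hr.2

lemma test_loop (hK : IsCompact K) (hc : Convex ℝ K) (h0 : (0 : E n) ∈ interior K)
    (hs : HasSmoothBoundary n K) (hT : IsCompact T) (h0T : (0 : E n) ∈ interior T)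
    {γ : ℝ → E n} {T₀ : ℝ} (hγ : IsClosedCharacteristic n K γ T₀) :
    0 < action n γ T₀ ∧ ∃ z dz, InE n 2 z dz ∧
      (∫ t in (0:ℝ)..(2 * π), suppFn n K (dz t)) = 2 * √(action n γ T₀) ∧
      (∫ t in (0:ℝ)..(2 * π), suppFn n T (dz t)) =
        lengthIn n (Jmap n '' polarBody n T) γ T₀ / √(action n γ T₀) := by
  obtain ⟨hT0, hper, hC1, -, hfr, d, hd, hder⟩ := hγ
  have hder' : ∀ t, deriv γ t = d • Jmap n (gradF n K (γ t)) := hder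
  have hg1 : ∀ t, gauge K (γ t) = 1 := fun t =>
    (gauge_eq_one_iff_mem_frontier hc (body_nhds h0)).2 (hfr t)
  have hJd : ∀ t, -Jmap n (deriv γ t) = d • gradF n K (γ t) := by
    intro t
    rw [hder', Jmap_smul, Jmap_Jmap, smul_neg, neg_neg]
  have hin : ∀ t, ⟪-Jmap n (deriv γ t), γ t⟫_ℝ = 2 * d := by
    intro t
    rw [hJd, real_inner_smul_left, inner_gradF_self h0 hs, hg1]; ring
  have hact : action n γ T₀ = d * T₀ := by
    unfold action
    simp only [hin]
    rw [intervalIntegral.integral_const, smul_eq_mul]; ring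
  have hapos : 0 < action n γ T₀ := by rw [hact]; positivity
  refine ⟨hapos, ?_⟩
  set a := action n γ T₀ with ha
  set s := √a with hsdef
  have hs0 : 0 < s := Real.sqrt_pos.2 hapos
  have hs2 : s ^ 2 = a := Real.sq_sqrt hapos.le
  set ω : ℝ := T₀ / (2 * π) with hω
  have hω0 : 0 < ω := by positivity
  have hω2 : ω * (2 * π) = T₀ := by rw [hω]; field_simp
  have hγdiff : ∀ t, HasDerivAt γ (deriv γ t) t := fun t =>
    ((hC1.differentiable one_ne_zero) t).hasDerivAt
  have hγc : Continuous γ := hC1.continuous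
  have hγ'c : Continuous (deriv γ) := hC1.continuous_deriv le_rfl
  let y : ℝ → E n := fun t => s⁻¹ • (-Jmap n (γ (ω * t)))
  let dz : ℝ → E n := fun t => (s⁻¹ * ω) • (-Jmap n (deriv γ (ω * t)))
  have hdzc : Continuous dz :=
    (((Jmap_continuous n).comp (hγ'c.comp (continuous_const.mul continuous_id))).neg).const_smul
      (s⁻¹ * ω)
  have hyd : ∀ t, HasDerivAt y (dz t) t := by
    intro t
    have h1 : HasDerivAt (fun t => γ (ω * t)) (ω • deriv γ (ω * t)) t := by
      have h2 : HasDerivAt (fun t : ℝ => ω * t) ω t := by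
        simpa using (hasDerivAt_id t).const_mul ω
      exact (hγdiff (ω * t)).scomp t h2
    have h3 := (((JC n).hasFDerivAt.comp_hasDerivAt t h1).neg).const_smul s⁻¹
    have h4 : dz t = s⁻¹ • -(JC n (ω • deriv γ (ω * t))) := by
      simp only [dz, JC_apply, Jmap_smul]
      module
    rw [h4]
    exact h3
  let mn : E n := (2 * π)⁻¹ • ∫ t in (0:ℝ)..(2 * π), y t
  have hyc : Continuous y := by
    rw [continuous_iff_continuousAt]; exact fun t => (hyd t).continuousAt
  let z : ℝ → E n := fun t => y t - mn
  have hzd : ∀ t, HasDerivAt z (dz t) t := fun t => (hyd t).sub_const mn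
  have hyper : Function.Periodic y (2 * π) := by
    intro t
    simp only [y]
    rw [mul_add, hω2, hper]
  have hintg : ∀ a b : ℝ, (∫ t in a..b, dz t) = z b - z a := fun a b =>
    intervalIntegral.integral_eq_sub_of_hasDerivAt (fun t _ => hzd t) (hdzc.intervalIntegrable _ _)
  refine ⟨z, dz, ⟨?_, fun a b => hdzc.intervalIntegrable _ _, ?_, ?_, ?_, ?_⟩, ?_, ?_⟩
  · intro t
    simp only [z, hyper t]
  · intro t
    rw [hintg]; abel
  · obtain ⟨B, hB⟩ := (isCompact_Icc (a := (0 : ℝ)) (b := 2 * π)).exists_bound_of_continuousOn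
      hdzc.continuousOn
    have hfin : IsFiniteMeasure (volume.restrict (Set.Ioc (0:ℝ) (2 * π))) := inferInstance
    refine MemLp.of_bound hdzc.aestronglyMeasurable B ?_
    rw [ae_restrict_iff' measurableSet_Ioc]
    exact Eventually.of_forall fun t ht => hB t ⟨ht.1.le, ht.2⟩
  · simp only [z]
    rw [intervalIntegral.integral_sub (hyc.intervalIntegrable _ _)
      (continuous_const.intervalIntegrable _ _), intervalIntegral.integral_const]
    simp only [mn]
    rw [sub_zero, smul_smul, mul_inv_cancel₀ (by positivity), one_smul, sub_self]
  · have h1 : ∀ t, ⟪Jmap n (z t), dz t⟫_ℝ = s⁻¹ * s⁻¹ * ω * (2 * d) - ⟪Jmap n mn, dz t⟫_ℝ := by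
      intro t
      have h2 : ⟪Jmap n (y t), dz t⟫_ℝ = s⁻¹ * s⁻¹ * ω * (2 * d) := by
        simp only [y, dz]
        rw [Jmap_smul, Jmap_neg, Jmap_Jmap, neg_neg, real_inner_smul_left, real_inner_smul_right,
          real_inner_comm, hin]
        ring
      simp only [z]
      rw [Jmap_sub, inner_sub_left, h2]
    have h3 : (∫ t in (0:ℝ)..(2 * π), ⟪Jmap n mn, dz t⟫_ℝ) = 0 := by
      have h4 := (innerSL ℝ (Jmap n mn)).intervalIntegral_comp_comm
        (hdzc.intervalIntegrable (μ := volume) 0 (2 * π))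
      simp only [innerSL_apply_apply] at h4
      rw [h4, hintg]
      have : z (2 * π) = z 0 := by
        have := hyper 0
        simp only [z]
        rw [zero_add] at this
        rw [this]
      rw [this, sub_self, inner_zero_right]
    simp only [h1]
    rw [intervalIntegral.integral_sub (continuous_const.intervalIntegrable _ _)
      ((continuous_const.inner hdzc).intervalIntegrable _ _), h3,
      intervalIntegral.integral_const, smul_eq_mul]
    have : (1 / 2) * ((2 * π - 0) * (s⁻¹ * s⁻¹ * ω * (2 * d)) - 0) = (d * (ω * (2 * π))) / s ^ 2 := by
      field_simp; ring
    rw [this, hω2, ← hact, hs2, div_self hapos.ne']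
  · have h1 : ∀ t, suppFn n K (dz t) = s⁻¹ * ω * (2 * d) := by
      intro t
      simp only [dz]
      rw [supp_smul hK (interior_subset h0) (by positivity), hJd,
        supp_smul hK (interior_subset h0) hd.le, supp_gradF hK hc h0 hs, hg1]
      ring
    simp only [h1]
    rw [intervalIntegral.integral_const, smul_eq_mul]
    have : (2 * π - 0) * (s⁻¹ * ω * (2 * d)) = 2 * ((d * (ω * (2 * π))) / s) := by
      field_simp; ring
    rw [this, hω2, ← hact, ← hs2]
    field_simp
  · have h1 : ∀ t, suppFn n T (dz t) =
        (s⁻¹ * ω) * gauge (Jmap n '' polarBody n T) (deriv γ (ω * t)) := by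
      intro t
      simp only [dz]
      rw [supp_smul hT (interior_subset h0T) (by positivity), gauge_polar hT h0T]
    simp only [h1]
    rw [intervalIntegral.integral_const_mul,
      intervalIntegral.integral_comp_mul_left
        (fun t => gauge (Jmap n '' polarBody n T) (deriv γ t)) hω0.ne', mul_zero, hω2]
    unfold lengthIn
    rw [smul_eq_mul]
    field_simp

end testloop
/-! ## Conclusion -/

/-- A function on the half-line whose slopes at `0` are antitone and bounded above. -/
lemma slope_limit {φ : ℝ → ℝ} {B : ℝ}
    (hconc : ∀ ε₁ ε₂, 0 < ε₁ → ε₁ ≤ ε₂ →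
      (1 - ε₁ / ε₂) * φ 0 + (ε₁ / ε₂) * φ ε₂ ≤ φ ε₁)
    (hB : ∀ ε, 0 < ε → φ ε ≤ φ 0 + ε * B) :
    ∃ q, Tendsto (fun ε => (φ ε - φ 0) / ε) (𝓝[>] (0:ℝ)) (𝓝 q) ∧ q ≤ B := by
  set f : ℝ → ℝ := fun ε => (φ ε - φ 0) / ε with hf
  have hle : ∀ ε ∈ Set.Ioi (0 : ℝ), f ε ≤ B := by
    intro ε hε
    have hε' : 0 < ε := hε
    simp only [hf]
    rw [div_le_iff₀ hε']
    linarith [hB ε hε']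
  have hanti : AntitoneOn f (Set.Ioi 0) := by
    intro x hx y hy hxy
    have hx' : 0 < x := hx
    have hy' : 0 < y := hy
    simp only [hf]
    have h := hconc x y hx' hxy
    rw [div_le_div_iff₀ hy' hx']
    have h2 : ((1 - x / y) * φ 0 + (x / y) * φ y) * y ≤ φ x * y := by gcongr
    have h3 : ((1 - x / y) * φ 0 + (x / y) * φ y) * y = (y - x) * φ 0 + x * φ y := by
      field_simp
    linarith
  have hlim : Tendsto (fun ε => -f ε) (𝓝[>] (0:ℝ)) (𝓝 (sInf ((fun ε => -f ε) '' Set.Ioi 0))) := by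
    apply MonotoneOn.tendsto_nhdsGT
    · intro x hx y hy hxy
      exact neg_le_neg (hanti hx hy hxy)
    · refine ⟨-B, ?_⟩
      rintro _ ⟨ε, hε, rfl⟩
      exact neg_le_neg (hle ε hε)
  refine ⟨-sInf ((fun ε => -f ε) '' Set.Ioi 0), by simpa using hlim.neg, ?_⟩
  have h1 : Tendsto f (𝓝[>] (0:ℝ)) (𝓝 (-sInf ((fun ε => -f ε) '' Set.Ioi 0))) := by
    simpa using hlim.neg
  exact le_of_tendsto h1 (eventually_mem_nhdsWithin.mono hle)

/-- For every capacity carrier `γ` of `K`, the derivative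
`d_T(K) = lim_{ε→0⁺} (c(K+εT) − c(K))/ε` satisfies `d_T(K) ≤ length_{JT°}(γ)`. -/
theorem capacity_derivative_le_length (n : ℕ) (K T : Set (E n))
    (hK : IsConvexBody n K) (h0K : (0 : E n) ∈ interior K) (hKs : HasSmoothBoundary n K)
    (hT : IsConvexBody n T) (h0T : (0 : E n) ∈ interior T)
    (γ : ℝ → E n) (T₀ : ℝ) (hγ : IsCapacityCarrier n K γ T₀) :
    ∃ L : ℝ,
      Tendsto (fun ε : ℝ => (capacity n (K + ε • T) - capacity n K) / ε)
        (𝓝[>] (0:ℝ)) (𝓝 L) ∧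
      L ≤ lengthIn n (Jmap n '' polarBody n T) γ T₀ := by
  obtain ⟨hKc, hKv, -⟩ := hK
  obtain ⟨hTc, hTv, -⟩ := hT
  have h0K' : (0 : E n) ∈ K := interior_subset h0K
  have h0T' : (0 : E n) ∈ T := interior_subset h0T
  obtain ⟨hcc, hmin⟩ := hγ
  obtain ⟨hapos, z0, dz0, hz0, hz0K, hz0T⟩ := test_loop hKc hKv h0K hKs hTc h0T hcc
  obtain ⟨γ1, hγ1, hγ1le⟩ := exists_closed_char hKc hKv h0K hKs hz0
  set a := action n γ T₀ with ha
  set len := lengthIn n (Jmap n '' polarBody n T) γ T₀ with hlen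
  set s := √a with hs
  have hs0 : 0 < s := Real.sqrt_pos.2 hapos
  have hs2 : s ^ 2 = a := Real.sq_sqrt hapos.le
  have hπ := Real.pi_pos
  let ℓK : (ℝ → E n) → ℝ := fun dz => ∫ t in (0:ℝ)..(2 * π), suppFn n K (dz t)
  let ℓT : (ℝ → E n) → ℝ := fun dz => ∫ t in (0:ℝ)..(2 * π), suppFn n T (dz t)
  have hℓK : ∀ dz, 0 ≤ ℓK dz := fun dz =>
    intervalIntegral.integral_nonneg (by positivity) fun t _ => supp_nonneg hKc h0K' _
  have hℓT : ∀ dz, 0 ≤ ℓT dz := fun dz =>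
    intervalIntegral.integral_nonneg (by positivity) fun t _ => supp_nonneg hTc h0T' _
  let S : ℝ → Set ℝ := fun ε => { r : ℝ | ∃ z dz : ℝ → E n, InE n 2 z dz ∧
      r = (1 / (2 * π)) * (ℓK dz + ε * ℓT dz) }
  let φ : ℝ → ℝ := fun ε => sInf (S ε)
  have hcap : ∀ ε, 0 ≤ ε → capacity n (K + ε • T) = (π * φ ε) ^ 2 := by
    intro ε hε
    unfold capacity
    congr 3
    ext r
    have key : ∀ z dz : ℝ → E n, InE n 2 z dz →
        (∫ t in (0:ℝ)..(2 * π), suppFn n (K + ε • T) (dz t)) = ℓK dz + ε * ℓT dz := by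
      intro z dz hz
      simp only [supp_add_set hKc h0K' hTc h0T' hε]
      have hi := hz.2.1 0 (2 * π)
      rw [intervalIntegral.integral_add (intervalIntegrable_supp hKc h0K' hi)
        ((intervalIntegrable_supp hTc h0T' hi).const_mul ε),
        intervalIntegral.integral_const_mul]
    constructor
    · rintro ⟨z, dz, hz, rfl⟩
      exact ⟨z, dz, hz, by rw [key z dz hz]⟩
    · rintro ⟨z, dz, hz, rfl⟩
      exact ⟨z, dz, hz, by rw [key z dz hz]⟩
  have hcap0 : capacity n K = (π * φ 0) ^ 2 := by
    unfold capacity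
    simp only [φ, S, zero_mul, add_zero, ℓK]
  have hne : ∀ ε, (S ε).Nonempty := fun ε => ⟨_, z0, dz0, hz0, rfl⟩
  have hbdd : ∀ ε, 0 ≤ ε → BddBelow (S ε) := by
    intro ε hε
    refine ⟨0, ?_⟩
    rintro _ ⟨z, dz, -, rfl⟩
    have := hℓK dz
    have := hℓT dz
    positivity
  have hφle : ∀ ε, 0 ≤ ε → ∀ z dz, InE n 2 z dz → φ ε ≤ (1 / (2 * π)) * (ℓK dz + ε * ℓT dz) :=
    fun ε hε z dz hz => csInf_le (hbdd ε hε) ⟨z, dz, hz, rfl⟩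
  have hφ0 : φ 0 = s / π := by
    apply le_antisymm
    · refine (hφle 0 le_rfl z0 dz0 hz0).trans (le_of_eq ?_)
      have : ℓK dz0 = 2 * s := hz0K
      rw [this]
      field_simp; ring
    · refine le_csInf (hne 0) ?_
      rintro _ ⟨z, dz, hz, rfl⟩
      have h1 : a ≤ ℓK dz ^ 2 / 4 := (hmin γ1 1 hγ1).trans (hγ1le z dz hz)
      have h2 : 2 * s ≤ ℓK dz := by
        refine abs_le_of_sq_le_sq' ?_ (hℓK dz) |>.2
        nlinarith
      have h3 : s / π = (1 / (2 * π)) * (2 * s) := by field_simp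
      rw [h3, zero_mul, add_zero]
      gcongr
  have hub : ∀ ε, 0 < ε → φ ε ≤ φ 0 + ε * (len / (2 * π * s)) := by
    intro ε hε
    refine (hφle ε hε.le z0 dz0 hz0).trans (le_of_eq ?_)
    have h1 : ℓK dz0 = 2 * s := hz0K
    have h2 : ℓT dz0 = len / s := hz0T
    rw [h1, h2, hφ0]
    field_simp
  have hconc : ∀ ε₁ ε₂, 0 < ε₁ → ε₁ ≤ ε₂ →
      (1 - ε₁ / ε₂) * φ 0 + (ε₁ / ε₂) * φ ε₂ ≤ φ ε₁ := by
    intro ε₁ ε₂ h1 h12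
    have h2 : 0 < ε₂ := h1.trans_le h12
    refine le_csInf (hne ε₁) ?_
    rintro _ ⟨z, dz, hz, rfl⟩
    have hθ : 0 ≤ ε₁ / ε₂ := by positivity
    have hθ1 : 0 ≤ 1 - ε₁ / ε₂ := by
      rw [sub_nonneg, div_le_one h2]; exact h12
    calc _ ≤ (1 - ε₁ / ε₂) * ((1 / (2 * π)) * (ℓK dz + 0 * ℓT dz)) +
          (ε₁ / ε₂) * ((1 / (2 * π)) * (ℓK dz + ε₂ * ℓT dz)) := by
          gcongr
          · exact hφle 0 le_rfl z dz hz
          · exact hφle ε₂ h2.le z dz hz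
      _ = _ := by field_simp; ring
  obtain ⟨q, hq, hqle⟩ := slope_limit hconc hub
  have hφlim : Tendsto φ (𝓝[>] (0:ℝ)) (𝓝 (φ 0)) := by
    have hid : Tendsto (fun ε : ℝ => ε) (𝓝[>] (0:ℝ)) (𝓝 0) := tendsto_nhdsWithin_of_tendsto_nhds tendsto_id
    have h1 := (hid.mul hq).const_add (φ 0)
    rw [zero_mul, add_zero] at h1
    refine h1.congr' ?_
    filter_upwards [self_mem_nhdsWithin] with ε hε
    have hε' : (0 : ℝ) < ε := hε
    field_simp
    ring
  refine ⟨π ^ 2 * (q * (φ 0 + φ 0)), ?_, ?_⟩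
  · have h1 := (hq.mul (hφlim.add_const (φ 0))).const_mul (π ^ 2)
    refine h1.congr' ?_
    filter_upwards [self_mem_nhdsWithin] with ε hε
    have hε' : (0 : ℝ) < ε := hε
    rw [hcap ε hε'.le, hcap0]
    field_simp
    ring
  · rw [hφ0]
    have h1 : π ^ 2 * (q * (s / π + s / π)) = q * (2 * π * s) := by field_simp; ring
    rw [h1]
    rwa [le_div_iff₀ (by positivity)] at hqle
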